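/- arXiv:0909.4250 — 5 statements merged into one kernel-verified Lean document; each statement's English description precedes it below -/
import Mathlib

section
/- Let p ∈ ℕ, let f ∈ Ω_w(A*, p) ∪ Ω(A*, p), and let f* be defined by f*(I) = sup_{m,n ≥ 0} f_{m,n}(I). Let (η_n)_{n=1}^∞ be Borel probability measures on A^ℕ with η_n(I) = f(I) for all I ∈ A^n, and set μ_n = (1/n) Σ_{i=0}^{n−1} η_n ∘ σ^{−i}. Suppose μ_{n_i} converges weakly to μ for some subsequence (n_i). Then μ is σ-invariant and: (i) there is C_1 > 0 with C_1 f*(I) ≤ μ([I]) ≤ f*(I) for all I ∈ A*; (ii) there is C_2 > 0 with liminf_{n→∞} Σ_{i=0}^p μ(A ∩ σ^{−n−i}(B)) ≥ C_2 μ(A)μ(B) for all Borel A, B ⊆ A^ℕ; (iii) μ is ergodic; (iv) μ is the unique ergodic σ-invariant measure on A^ℕ for which there exists C_3 > 0 with μ([I]) ≥ C_3 f(I) for all I ∈ A*; (v) the full sequence (1/n) Σ_{i=0}^{n−1} η_n ∘ σ^{−i} converges weakly to μ as n → ∞; and (vi) if moreover f ∈ Ω(A*, p), there is C_4 > 0 with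 liminf_{n→∞} μ(A ∩ σ^{−n}(B)) ≥ C_4 μ(A)μ(B) for all Borel A, B ⊆ A^ℕ. -/
open MeasureTheory Filter Topology
open scoped Classical ENNReal NNReal

noncomputable section

/-- The left shift on one-sided sequences. -/
def shiftMap {A : Type} : (ℕ → A) → (ℕ → A) := fun x n => x (n + 1)

/-- The cylinder set of a finite word. -/
def cyl {A : Type} (I : List A) : Set (ℕ → A) :=
  {x | ∀ i : Fin I.length, x i = I.get i}

/-- Membership of a word in the language of `X`. -/
def Lang {A : Type} (X : Set (ℕ → A)) (I : List A) : Prop :=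
  (cyl I ∩ X).Nonempty

/-- `X` is a (nonempty) one-sided subshift. -/
def IsSubshift {A : Type} [TopologicalSpace A] (X : Set (ℕ → A)) : Prop :=
  X.Nonempty ∧ IsCompact X ∧ shiftMap '' X ⊆ X

/-- weak `p`-specification -/
def WeakSpecification {A : Type} (X : Set (ℕ → A)) (p : ℕ) : Prop :=
  ∀ I J : List A, Lang X I → Lang X J →
    ∃ K : List A, K.length ≤ p ∧ Lang X (I ++ K ++ J)

/-- `p`-specification -/
def Specification {A : Type} (X : Set (ℕ → A)) (p : ℕ) : Prop :=
  ∀ I J : List A, Lang X I → Lang X J →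
    ∃ K : List A, K.length = p ∧ Lang X (I ++ K ++ J)

/-- invariant probability measures supported on `X` (predicate on plain measures) -/
def InvOn {A : Type} [MeasurableSpace A] (X : Set (ℕ → A)) (μ : Measure (ℕ → A)) : Prop :=
  IsProbabilityMeasure μ ∧ μ.map shiftMap = μ ∧ μ X = 1

/-- the set of shift-invariant probability measures on `X` -/
def MInv {A : Type} [MeasurableSpace A] (X : Set (ℕ → A)) :
    Set (ProbabilityMeasure (ℕ → A)) :=
  {μ | (μ : Measure (ℕ → A)).map shiftMap = (μ : Measure (ℕ → A)) ∧
    (μ : Measure (ℕ → A)) X = 1}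

/-- measure of a word: `μ([I] ∩ X)` -/
def mw {A : Type} [MeasurableSpace A] (X : Set (ℕ → A)) (μ : Measure (ℕ → A))
    (I : List A) : ℝ :=
  (μ (cyl I ∩ X)).toReal

/-- the initial word of length `n` of a sequence -/
def wordOf {A : Type} (x : ℕ → A) (n : ℕ) : List A := List.ofFn (fun i : Fin n => x i)

/-- `n`-block entropy -/
def Hblock {A : Type} [Fintype A] [MeasurableSpace A] (X : Set (ℕ → A))
    (μ : Measure (ℕ → A)) (n : ℕ) : ℝ :=
  -∑ w : Fin n → A, mw X μ (List.ofFn w) * Real.log (mw X μ (List.ofFn w))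

/-- measure-theoretic entropy (the limit exists for invariant measures; `liminf` realizes it) -/
def ent {A : Type} [Fintype A] [MeasurableSpace A] (X : Set (ℕ → A))
    (μ : Measure (ℕ → A)) : ℝ :=
  liminf (fun n : ℕ => Hblock X μ n / n) atTop

/-- extended logarithm: `log t`, with value `⊥` for `t ≤ 0` -/
def elog (t : ℝ) : EReal := if t ≤ 0 then ⊥ else ((Real.log t : ℝ) : EReal)

/-- the integral `∫ log g dμ`, valued in `ℝ ∪ {−∞}` -/
def intlog {Ω : Type*} [MeasurableSpace Ω] (μ : Measure Ω) (g : Ω → ℝ) : EReal :=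
  ((∫⁻ x, ENNReal.ofReal (Real.log (g x)) ∂μ : ℝ≥0∞) : EReal) -
    ((∫⁻ x, (if g x ≤ 0 then (⊤ : ℝ≥0∞) else ENNReal.ofReal (-Real.log (g x))) ∂μ : ℝ≥0∞) : EReal)

/-- sub-additive potential `Φ = (log φ_n)_{n ≥ 1}` -/
def SubaddPot {A : Type} [TopologicalSpace A] (X : Set (ℕ → A))
    (φ : ℕ → (ℕ → A) → ℝ) : Prop :=
  (∀ n, 1 ≤ n → ContinuousOn (φ n) X) ∧
  (∀ n, 1 ≤ n → ∀ x ∈ X, 0 ≤ φ n x) ∧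
  ∃ c > (0:ℝ), ∀ n m : ℕ, 1 ≤ n → 1 ≤ m → ∀ x ∈ X,
    φ (n + m) x ≤ c * φ n x * φ m (shiftMap^[n] x)

/-- `Φ_*(μ) = lim (1/n) ∫ log φ_n dμ` (realized as a `liminf` in `EReal`) -/
def PhiStar {A : Type} [MeasurableSpace A] (μ : Measure (ℕ → A))
    (φ : ℕ → (ℕ → A) → ℝ) : EReal :=
  liminf (fun n : ℕ => (((n : ℝ)⁻¹ : ℝ) : EReal) * intlog μ (φ n)) atTop

/-- sub-multiplicative function on the language of `X` -/
def Submult {A : Type} (X : Set (ℕ → A)) (φ : List A → ℝ) : Prop :=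
  (∀ I, Lang X I → 0 ≤ φ I) ∧ φ [] = 1 ∧
  ∃ c > (0:ℝ), ∀ I J : List A, Lang X (I ++ J) → φ (I ++ J) ≤ c⁻¹ * φ I * φ J

/-- the potential generated by a word function -/
def genPot {A : Type} (φ : List A → ℝ) : ℕ → (ℕ → A) → ℝ := fun n x => φ (wordOf x n)

/-- the scaled potential `cΦ = (log φ_n^c)` -/
def scPot {Ω : Type*} (c : ℝ) (φ : ℕ → Ω → ℝ) : ℕ → Ω → ℝ := fun n x => φ n x ^ c

/-- the "pressure value" `Φ_*(μ) + h_μ` -/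
def eqVal {A : Type} [Fintype A] [MeasurableSpace A] (X : Set (ℕ → A))
    (φ : ℕ → (ℕ → A) → ℝ) (μ : ProbabilityMeasure (ℕ → A)) : EReal :=
  PhiStar (μ : Measure (ℕ → A)) φ + ((ent X (μ : Measure (ℕ → A)) : ℝ) : EReal)

/-- the set of equilibrium states of `Φ` -/
def EqSet {A : Type} [Fintype A] [MeasurableSpace A] (X : Set (ℕ → A))
    (φ : ℕ → (ℕ → A) → ℝ) : Set (ProbabilityMeasure (ℕ → A)) :=
  {μ | μ ∈ MInv X ∧ eqVal X φ μ = ⨆ η ∈ MInv X, eqVal X φ η}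

/-- sequence map induced by a one-block map -/
def blockMap {A B : Type} (π : A → B) : (ℕ → A) → (ℕ → B) := fun x n => π (x n)

/-- pushforward of a probability measure under a one-block map -/
def pushM {A B : Type} [MeasurableSpace A] [MeasurableSpace B] (π : A → B)
    (μ : ProbabilityMeasure (ℕ → A)) : Measure (ℕ → B) :=
  (μ : Measure (ℕ → A)).map (blockMap π)

/-- conditional equilibrium states of `Φ` over `ν` -/
def CondEqSet {A B : Type} [Fintype A] [MeasurableSpace A] [MeasurableSpace B]
    (X : Set (ℕ → A)) (π : A → B) (φ : ℕ → (ℕ → A) → ℝ) (ν : Measure (ℕ → B)) :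
    Set (ProbabilityMeasure (ℕ → A)) :=
  {μ | μ ∈ MInv X ∧ pushM π μ = ν ∧
    eqVal X φ μ = ⨆ η ∈ {η | η ∈ MInv X ∧ pushM π η = ν}, eqVal X φ η}

/-- the projected word function `ψ(J) = Σ_{I : πI = J} φ(I)` -/
def psiProj {A B : Type} [Fintype A] (X : Set (ℕ → A)) (π : A → B) (φ : List A → ℝ)
    (J : List B) : ℝ :=
  ∑ w : Fin J.length → A,
    if Lang X (List.ofFn w) ∧ List.map π (List.ofFn w) = J then φ (List.ofFn w) else 0

/-- `φ^{(2)}(J) = (Σ_{I : πI = J} φ(I)^{1/a₁})^{a₁}` -/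
def phiTwo {A B : Type} [Fintype A] (X : Set (ℕ → A)) (π : A → B) (φ : List A → ℝ)
    (a₁ : ℝ) (J : List B) : ℝ :=
  (∑ w : Fin J.length → A,
    if Lang X (List.ofFn w) ∧ List.map π (List.ofFn w) = J
    then φ (List.ofFn w) ^ a₁⁻¹ else 0) ^ a₁

/-- `a`-weighted pressure value for `k = 2` -/
def wVal2 {A B : Type} [Fintype A] [Fintype B] [MeasurableSpace A] [MeasurableSpace B]
    (X : Set (ℕ → A)) (Y : Set (ℕ → B)) (π : A → B) (φ : ℕ → (ℕ → A) → ℝ)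
    (a₁ a₂ : ℝ) (μ : ProbabilityMeasure (ℕ → A)) : EReal :=
  PhiStar (μ : Measure (ℕ → A)) φ +
    ((a₁ * ent X (μ : Measure (ℕ → A)) + a₂ * ent Y (pushM π μ) : ℝ) : EReal)

/-- the set of `a`-weighted equilibrium states, `k = 2` -/
def WEqSet2 {A B : Type} [Fintype A] [Fintype B] [MeasurableSpace A] [MeasurableSpace B]
    (X : Set (ℕ → A)) (Y : Set (ℕ → B)) (π : A → B) (φ : ℕ → (ℕ → A) → ℝ)
    (a₁ a₂ : ℝ) : Set (ProbabilityMeasure (ℕ → A)) :=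
  {μ | μ ∈ MInv X ∧ wVal2 X Y π φ a₁ a₂ μ = ⨆ η ∈ MInv X, wVal2 X Y π φ a₁ a₂ η}

/-- convexity of a set of probability measures -/
def ConvexPM {Ω : Type*} [MeasurableSpace Ω] (S : Set (ProbabilityMeasure Ω)) : Prop :=
  ∀ μ₁ ∈ S, ∀ μ₂ ∈ S, ∀ t : ℝ, 0 ≤ t → t ≤ 1 → ∀ μ : ProbabilityMeasure Ω,
    (μ : Measure Ω) = ENNReal.ofReal t • (μ₁ : Measure Ω) +
      ENNReal.ofReal (1 - t) • (μ₂ : Measure Ω) → μ ∈ S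

/-- extreme points of a set of probability measures -/
def IsExtremePM {Ω : Type*} [MeasurableSpace Ω] (S : Set (ProbabilityMeasure Ω))
    (μ : ProbabilityMeasure Ω) : Prop :=
  μ ∈ S ∧ ∀ μ₁ ∈ S, ∀ μ₂ ∈ S, ∀ t : ℝ, 0 < t → t < 1 →
    (μ : Measure Ω) = ENNReal.ofReal t • (μ₁ : Measure Ω) +
      ENNReal.ofReal (1 - t) • (μ₂ : Measure Ω) → μ₁ = μ₂

/-- the class `Ω_w(A*, p)` -/
def OmegaW {A : Type} [Fintype A] (p : ℕ) (f : List A → ℝ) : Prop :=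
  (∀ I, 0 ≤ f I ∧ f I ≤ 1) ∧
  ∃ c > (0:ℝ),
    (∀ n : ℕ, ∑ w : Fin n → A, f (List.ofFn w) = 1) ∧
    (∀ I J : List A, ∃ K : List A, K.length ≤ p ∧ c * (f I * f J) ≤ f (I ++ K ++ J)) ∧
    (∀ I : List A, ∃ i j : A, c * f I ≤ f (i :: I) ∧ c * f I ≤ f (I ++ [j]))

/-- the class `Ω(A*, p)` -/
def OmegaS {A : Type} [Fintype A] (p : ℕ) (f : List A → ℝ) : Prop :=
  (∀ I, 0 ≤ f I ∧ f I ≤ 1) ∧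
  ∃ c > (0:ℝ),
    (∀ n : ℕ, ∑ w : Fin n → A, f (List.ofFn w) = 1) ∧
    (∀ I J : List A, ∃ K : List A, K.length = p ∧ c * (f I * f J) ≤ f (I ++ K ++ J))

/-- `f_{m,n}(I)` -/
def fmn {A : Type} [Fintype A] (f : List A → ℝ) (m n : ℕ) (I : List A) : ℝ :=
  ∑ u : Fin m → A, ∑ v : Fin n → A, f (List.ofFn u ++ I ++ List.ofFn v)

/-- `f*(I) = sup_{m,n} f_{m,n}(I)` -/
def fstar {A : Type} [Fintype A] (f : List A → ℝ) (I : List A) : ℝ :=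
  ⨆ m : ℕ, ⨆ n : ℕ, fmn f m n I

/-- the class `D_w(X, p)` -/
def Dw {A : Type} (X : Set (ℕ → A)) (p : ℕ) (φ : List A → ℝ) : Prop :=
  (∀ I, Lang X I → 0 ≤ φ I) ∧ (∃ I, Lang X I ∧ I ≠ [] ∧ 0 < φ I) ∧
  ∃ c : ℝ, 0 < c ∧ c ≤ 1 ∧
    (∀ I J : List A, Lang X (I ++ J) → φ (I ++ J) ≤ c⁻¹ * φ I * φ J) ∧
    (∀ I J : List A, Lang X I → Lang X J →
      ∃ K : List A, K.length ≤ p ∧ Lang X (I ++ K ++ J) ∧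
        c * (φ I * φ J) ≤ φ (I ++ K ++ J))

/-- the class `D(X, p)` -/
def Ds {A : Type} (X : Set (ℕ → A)) (p : ℕ) (φ : List A → ℝ) : Prop :=
  (∀ I, Lang X I → 0 ≤ φ I) ∧ (∃ I, Lang X I ∧ I ≠ [] ∧ 0 < φ I) ∧
  ∃ c : ℝ, 0 < c ∧ c ≤ 1 ∧
    (∀ I J : List A, Lang X (I ++ J) → φ (I ++ J) ≤ c⁻¹ * φ I * φ J) ∧
    (∀ I J : List A, Lang X I → Lang X J →
      ∃ K : List A, K.length = p ∧ Lang X (I ++ K ++ J) ∧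
        c * (φ I * φ J) ≤ φ (I ++ K ++ J))

end

noncomputable section

/-- iterated one-block maps along a chain of alphabets: `tauFrom π j i : B j → B (j+i)` -/
def tauFrom {B : ℕ → Type} (π : ∀ i, B i → B (i+1)) (j : ℕ) : (i : ℕ) → B j → B (j + i)
  | 0 => id
  | (i+1) => fun a => π (j + i) (tauFrom π j i a)

/-- weighted pressure value along a chain starting at index `j`, with `k` weights `w 0, …, w (k-1)` -/
def wValGen {B : ℕ → Type} [∀ i, Fintype (B i)] [∀ i, MeasurableSpace (B i)]
    (π : ∀ i, B i → B (i+1)) (X : ∀ i, Set (ℕ → B i)) (j k : ℕ) (w : ℕ → ℝ)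
    (φ : ℕ → (ℕ → B j) → ℝ) (μ : ProbabilityMeasure (ℕ → B j)) : EReal :=
  PhiStar (μ : Measure (ℕ → B j)) φ +
    ((∑ i ∈ Finset.range k, w i *
      ent (X (j + i)) ((μ : Measure (ℕ → B j)).map (blockMap (tauFrom π j i))) : ℝ) : EReal)

/-- weighted equilibrium states along a chain -/
def wEqSetGen {B : ℕ → Type} [∀ i, Fintype (B i)] [∀ i, MeasurableSpace (B i)]
    (π : ∀ i, B i → B (i+1)) (X : ∀ i, Set (ℕ → B i)) (j k : ℕ) (w : ℕ → ℝ)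
    (φ : ℕ → (ℕ → B j) → ℝ) : Set (ProbabilityMeasure (ℕ → B j)) :=
  {μ | μ ∈ MInv (X j) ∧
    wValGen π X j k w φ μ = ⨆ η ∈ MInv (X j), wValGen π X j k w φ η}

end

/-! ### Sums over words -/
noncomputable section

/-- sum of `g` over all words of length `n` -/
def wS {A : Type} [Fintype A] (n : ℕ) (g : List A → ℝ) : ℝ := ∑ w : Fin n → A, g (List.ofFn w)

lemma wS_add {A : Type} [Fintype A] (m n : ℕ) (g : List A → ℝ) :
    wS (m + n) g = wS m (fun u => wS n (fun v => g (u ++ v))) := by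
  unfold wS
  rw [← Fintype.sum_prod_type', ← (Fin.appendEquiv m n).sum_comp]
  refine Finset.sum_congr rfl fun x _ => ?_
  beta_reduce
  rw [← List.ofFn_fin_append]; rfl

lemma wS_mono {A : Type} [Fintype A] {n : ℕ} {g h : List A → ℝ}
    (H : ∀ w, w.length = n → g w ≤ h w) : wS n g ≤ wS n h :=
  Finset.sum_le_sum fun w _ => H _ (by simp)

lemma wS_congr {A : Type} [Fintype A] {n : ℕ} {g h : List A → ℝ}
    (H : ∀ w, w.length = n → g w = h w) : wS n g = wS n h :=
  Finset.sum_congr rfl fun w _ => H _ (by simp)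

lemma wS_nonneg {A : Type} [Fintype A] {n : ℕ} {g : List A → ℝ}
    (H : ∀ w, 0 ≤ g w) : 0 ≤ wS n g :=
  Finset.sum_nonneg fun w _ => H _

lemma wS_mul {A : Type} [Fintype A] (n : ℕ) (c : ℝ) (g : List A → ℝ) :
    wS n (fun w => c * g w) = c * wS n g := by
  unfold wS; rw [Finset.mul_sum]

lemma wS_mul_right {A : Type} [Fintype A] (n : ℕ) (c : ℝ) (g : List A → ℝ) :
    wS n (fun w => g w * c) = wS n g * c := by
  unfold wS; rw [Finset.sum_mul]

lemma wS_comm {A : Type} [Fintype A] (m n : ℕ) (g : List A → List A → ℝ) :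
    wS m (fun u => wS n (fun v => g u v)) = wS n (fun v => wS m (fun u => g u v)) := by
  unfold wS; rw [Finset.sum_comm]

lemma wS_sum {A : Type} [Fintype A] (m : ℕ) (F : Finset ℕ) (g : List A → ℕ → ℝ) :
    wS m (fun u => ∑ i ∈ F, g u i) = ∑ i ∈ F, wS m (fun u => g u i) := by
  unfold wS; rw [Finset.sum_comm]

lemma wS_single {A : Type} [Fintype A] {g : List A → ℝ} (H : ∀ w, 0 ≤ g w) (K : List A) :
    g K ≤ wS K.length g := by
  have := Finset.single_le_sum (f := fun w : Fin K.length → A => g (List.ofFn w))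
    (fun w _ => H _) (Finset.mem_univ (fun i => K.get i))
  simpa [wS, List.ofFn_get] using this

lemma fmn_eq {A : Type} [Fintype A] (f : List A → ℝ) (m n : ℕ) (I : List A) :
    fmn f m n I = wS m (fun u => wS n (fun v => f (u ++ I ++ v))) := rfl

lemma fmn_zero {A : Type} [Fintype A] (f : List A → ℝ) (I : List A) : fmn f 0 0 I = f I := by
  simp [fmn]

lemma fmn_nonneg {A : Type} [Fintype A] {f : List A → ℝ} (hf : ∀ I, 0 ≤ f I) (m n : ℕ)
    (I : List A) : 0 ≤ fmn f m n I := by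
  rw [fmn_eq]; exact wS_nonneg fun _ => wS_nonneg fun _ => hf _

/-- common consequence of the two hypotheses -/
structure Good {A : Type} [Fintype A] (p : ℕ) (f : List A → ℝ) (D : ℝ) : Prop where
  nonneg : ∀ I, 0 ≤ f I
  pos : 0 < D
  left : ∀ a, p ≤ a → ∀ W, D * f W ≤ wS a (fun L => f (L ++ W))
  right : ∀ a, p ≤ a → ∀ W, D * f W ≤ wS a (fun R => f (W ++ R))

lemma good_of_S {A : Type} [Fintype A] {p : ℕ} {f : List A → ℝ} (h : OmegaS p f) :
    ∃ D, Good p f D := by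
  obtain ⟨h0, c, hc, h1, h2⟩ := h
  refine ⟨c, fun I => (h0 I).1, hc, ?_, ?_⟩
  · intro a ha W
    obtain ⟨b, rfl⟩ := Nat.exists_eq_add_of_le ha
    rw [Nat.add_comm, wS_add]
    calc c * f W = wS b (fun J => c * f W * f J) := by
          rw [wS_mul]; simp [wS, h1]
      _ ≤ _ := wS_mono fun J _ => ?_
    obtain ⟨K, hK, hK2⟩ := h2 J W
    subst hK
    have := wS_single (g := fun K => f (J ++ K ++ W)) (fun _ => (h0 _).1) K
    nlinarith
  · intro a ha W
    obtain ⟨b, rfl⟩ := Nat.exists_eq_add_of_le ha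
    rw [wS_add, wS_comm]
    calc c * f W = wS b (fun J => c * f W * f J) := by
          rw [wS_mul]; simp [wS, h1]
      _ ≤ _ := wS_mono fun J _ => ?_
    obtain ⟨K, hK, hK2⟩ := h2 W J
    subst hK
    have := wS_single (g := fun K => f (W ++ (K ++ J))) (fun _ => (h0 _).1) K
    simp only [List.append_assoc] at *
    nlinarith

lemma good_of_W {A : Type} [Fintype A] {p : ℕ} {f : List A → ℝ} (h : OmegaW p f) :
    ∃ D, Good p f D := by
  obtain ⟨h0, c', hc', h1, h2', h3'⟩ := h
  have hn := fun I => (h0 I).1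
  obtain ⟨c, hc, hc1, hcc⟩ : ∃ c : ℝ, 0 < c ∧ c ≤ 1 ∧ c ≤ c' :=
    ⟨min c' 1, by positivity, min_le_right _ _, min_le_left _ _⟩
  have h2 : ∀ I J : List A, ∃ K : List A, K.length ≤ p ∧ c * (f I * f J) ≤ f (I ++ K ++ J) := by
    intro I J
    obtain ⟨K, hK, hK2⟩ := h2' I J
    exact ⟨K, hK, le_trans (mul_le_mul_of_nonneg_right hcc (mul_nonneg (hn _) (hn _))) hK2⟩
  have hl : ∀ a W, c ^ a * f W ≤ wS a (fun L => f (L ++ W)) := by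
    intro a
    induction a with
    | zero => intro W; simp [wS]
    | succ a ih =>
      intro W
      obtain ⟨i, _, hi, _⟩ := h3' W
      rw [wS_add]
      have h4 : c * f W ≤ f ([i] ++ W) := le_trans (mul_le_mul_of_nonneg_right hcc (hn _)) hi
      have h5 := ih ([i] ++ W)
      calc c ^ (a+1) * f W = c ^ a * (c * f W) := by ring
        _ ≤ c ^ a * f ([i] ++ W) := mul_le_mul_of_nonneg_left h4 (by positivity)
        _ ≤ _ := h5
        _ ≤ _ := wS_mono fun L _ => ?_
      have := wS_single (g := fun v => f (L ++ v ++ W)) (fun _ => hn _) [i]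
      simpa using this
  have hr : ∀ a W, c ^ a * f W ≤ wS a (fun R => f (W ++ R)) := by
    intro a
    induction a with
    | zero => intro W; simp [wS]
    | succ a ih =>
      intro W
      obtain ⟨_, i, _, hi⟩ := h3' W
      rw [Nat.add_comm, wS_add, wS_comm]
      have h4 : c * f W ≤ f (W ++ [i]) := le_trans (mul_le_mul_of_nonneg_right hcc (hn _)) hi
      have h5 := ih (W ++ [i])
      calc c ^ (1+a) * f W = c ^ a * (c * f W) := by ring
        _ ≤ c ^ a * f (W ++ [i]) := mul_le_mul_of_nonneg_left h4 (by positivity)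
        _ ≤ _ := h5
        _ ≤ _ := wS_mono fun L _ => ?_
      have := wS_single (g := fun v => f (W ++ (v ++ L))) (fun _ => hn _) [i]
      simpa using this
  have hcp : ∀ k : ℕ, k ≤ p → c ^ p ≤ c ^ k := fun k hk => pow_le_pow_of_le_one hc.le hc1 hk
  refine ⟨c ^ (p + 1) / (p + 1), hn, by positivity, ?_, ?_⟩
  · intro a ha W
    obtain ⟨b, rfl⟩ := Nat.exists_eq_add_of_le ha
    rw [div_mul_eq_mul_div, div_le_iff₀ (by positivity)]
    have key : ∀ J : List A, c ^ (p+1) * f W * f J ≤ ∑ i ∈ Finset.range (p+1),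
        wS (p - i) (fun L => wS i (fun K => f (L ++ (J ++ (K ++ W))))) := by
      intro J
      obtain ⟨K, hK, hK2⟩ := h2 J W
      have e1 := hl (p - K.length) (J ++ K ++ W)
      have e2 : wS (p - K.length) (fun L => f (L ++ (J ++ K ++ W))) ≤
          wS (p - K.length) (fun L => wS K.length (fun K => f (L ++ (J ++ (K ++ W))))) :=
        wS_mono fun L _ => by
          have := wS_single (g := fun K => f (L ++ (J ++ (K ++ W)))) (fun _ => hn _) K
          simpa using this
      have e3 := Finset.single_le_sum (f := fun i =>
        wS (p - i) (fun L => wS i (fun K => f (L ++ (J ++ (K ++ W)))))) (s := Finset.range (p+1))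
        (fun i _ => wS_nonneg fun _ => wS_nonneg fun _ => hn _)
        (Finset.mem_range.2 (Nat.lt_succ_of_le hK))
      have e4 : c ^ p * (c * (f J * f W)) ≤ c ^ (p - K.length) * f (J ++ K ++ W) :=
        mul_le_mul (hcp _ (Nat.sub_le _ _)) hK2
          (mul_nonneg hc.le (mul_nonneg (hn _) (hn _))) (by positivity)
      calc _ = c ^ p * (c * (f J * f W)) := by ring
        _ ≤ _ := e4.trans (e1.trans (e2.trans e3))
    calc c ^ (p+1) * f W = wS b (fun J => c ^ (p+1) * f W * f J) := by
          rw [wS_mul]; simp [wS, h1]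
      _ ≤ _ := wS_mono fun J _ => key J
      _ = _ := ?_
    rw [wS_sum, Finset.sum_congr rfl (g := fun _ => wS (p + b) (fun L => f (L ++ W)))]
    · simp; ring
    · intro i hi
      have hi' : i ≤ p := Nat.lt_succ_iff.1 (Finset.mem_range.1 hi)
      rw [wS_comm]
      have : p + b = (p - i) + (b + i) := by omega
      rw [this, wS_add]
      refine wS_congr fun L _ => ?_
      rw [wS_add]
      simp
  · intro a ha W
    obtain ⟨b, rfl⟩ := Nat.exists_eq_add_of_le ha
    rw [div_mul_eq_mul_div, div_le_iff₀ (by positivity)]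
    have key : ∀ J : List A, c ^ (p+1) * f W * f J ≤ ∑ i ∈ Finset.range (p+1),
        wS (p - i) (fun R => wS i (fun K => f (W ++ (K ++ (J ++ R))))) := by
      intro J
      obtain ⟨K, hK, hK2⟩ := h2 W J
      have e1 := hr (p - K.length) (W ++ K ++ J)
      have e2 : wS (p - K.length) (fun L => f (W ++ K ++ J ++ L)) ≤
          wS (p - K.length) (fun L => wS K.length (fun K => f (W ++ (K ++ (J ++ L))))) :=
        wS_mono fun L _ => by
          have := wS_single (g := fun K => f (W ++ (K ++ (J ++ L)))) (fun _ => hn _) K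
          simpa using this
      have e3 := Finset.single_le_sum (f := fun i =>
        wS (p - i) (fun L => wS i (fun K => f (W ++ (K ++ (J ++ L)))))) (s := Finset.range (p+1))
        (fun i _ => wS_nonneg fun _ => wS_nonneg fun _ => hn _)
        (Finset.mem_range.2 (Nat.lt_succ_of_le hK))
      have e4 : c ^ p * (c * (f W * f J)) ≤ c ^ (p - K.length) * f (W ++ K ++ J) :=
        mul_le_mul (hcp _ (Nat.sub_le _ _)) hK2
          (mul_nonneg hc.le (mul_nonneg (hn _) (hn _))) (by positivity)
      calc _ = c ^ p * (c * (f W * f J)) := by ring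
        _ ≤ _ := e4.trans (e1.trans (e2.trans e3))
    calc c ^ (p+1) * f W = wS b (fun J => c ^ (p+1) * f W * f J) := by
          rw [wS_mul]; simp [wS, h1]
      _ ≤ _ := wS_mono fun J _ => key J
      _ = _ := ?_
    rw [wS_sum, Finset.sum_congr rfl (g := fun _ => wS (p + b) (fun R => f (W ++ R)))]
    · simp; ring
    · intro i hi
      have hi' : i ≤ p := Nat.lt_succ_iff.1 (Finset.mem_range.1 hi)
      have : p + b = i + (b + (p - i)) := by omega
      rw [this, wS_add]
      have h7 : ∀ K : List A, wS (b + (p - i)) (fun v => f (W ++ (K ++ v))) =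
          wS b (fun J => wS (p - i) (fun R => f (W ++ (K ++ (J ++ R))))) := fun K => wS_add _ _ _
      simp_rw [h7]
      rw [wS_comm i]
      refine wS_congr fun J _ => ?_
      exact wS_comm _ _ _

lemma Good.fmn_le {A : Type} [Fintype A] {p : ℕ} {f : List A → ℝ} {D : ℝ} (h : Good p f D)
    {m n m' n' : ℕ} (hm : m + p ≤ m') (hn : n + p ≤ n') (I : List A) :
    D ^ 2 * fmn f m n I ≤ fmn f m' n' I := by
  obtain ⟨a, rfl⟩ := Nat.exists_eq_add_of_le' (show m ≤ m' by omega)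
  obtain ⟨b, rfl⟩ := Nat.exists_eq_add_of_le (show n ≤ n' by omega)
  have e1 : D * fmn f m n I ≤ fmn f m (n + b) I := by
    rw [fmn_eq, fmn_eq, ← wS_mul]
    refine wS_mono fun u _ => ?_
    rw [← wS_mul, wS_add]
    refine wS_mono fun v _ => ?_
    simpa using h.right b (by omega) (u ++ I ++ v)
  have e2 : D * fmn f m (n + b) I ≤ fmn f (a + m) (n + b) I := by
    rw [fmn_eq, fmn_eq, wS_add, wS_comm a, ← wS_mul]
    refine wS_mono fun u _ => ?_
    rw [← wS_mul, wS_comm]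
    refine wS_mono fun v _ => ?_
    simpa using h.left a (by omega) (u ++ I ++ v)
  have := mul_le_mul_of_nonneg_left e1 h.pos.le
  nlinarith

end

/-! ### Cylinders and measures -/
section Cyl
set_option linter.unusedSectionVars false

lemma shift_iter {A : Type} (k : ℕ) (x : ℕ → A) (n : ℕ) : shiftMap^[k] x n = x (n + k) := by
  induction k generalizing x with
  | zero => rfl
  | succ k ih => rw [Function.iterate_succ_apply, ih]; simp [shiftMap]; congr 1

lemma mem_cyl {A : Type} (I : List A) (x : ℕ → A) :
    x ∈ cyl I ↔ ∀ i (h : i < I.length), x i = I[i] :=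
  ⟨fun h i hi => h ⟨i, hi⟩, fun h i => h i i.2⟩

lemma mem_cyl_ofFn {A : Type} {n : ℕ} (w : Fin n → A) (x : ℕ → A) :
    x ∈ cyl (List.ofFn w) ↔ (fun i : Fin n => x i) = w := by
  rw [mem_cyl]
  constructor
  · intro h; funext i; simpa using h i (by simp)
  · rintro rfl i hi; simp

lemma cyl_append {A : Type} (I J : List A) :
    cyl (I ++ J) = cyl I ∩ shiftMap^[I.length] ⁻¹' cyl J := by
  ext x
  simp only [Set.mem_inter_iff, Set.mem_preimage, mem_cyl, shift_iter]
  constructor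
  · intro h
    refine ⟨fun i hi => ?_, fun i hi => ?_⟩
    · rw [h i (by simp; omega), List.getElem_append_left]
    · rw [h _ (by simp; omega), List.getElem_append_right (by omega)]; simp
  · rintro ⟨h1, h2⟩ i hi
    by_cases h : i < I.length
    · rw [h1 i h, List.getElem_append_left]
    · have := h2 (i - I.length) (by simp at hi; omega)
      rw [List.getElem_append_right (by omega), ← this]
      congr 1; omega

lemma cyl_nil {A : Type} : cyl ([] : List A) = Set.univ := by
  ext x; simp [mem_cyl]

variable {A : Type} [Fintype A] [TopologicalSpace A]
    [DiscreteTopology A] [MeasurableSpace A] [BorelSpace A]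

lemma meas_shift : Measurable (shiftMap : (ℕ → A) → (ℕ → A)) :=
  measurable_pi_lambda _ fun n => measurable_pi_apply (n + 1)

lemma meas_iter (k : ℕ) : Measurable (shiftMap^[k] : (ℕ → A) → (ℕ → A)) := meas_shift.iterate k

lemma cont_shift : Continuous (shiftMap : (ℕ → A) → (ℕ → A)) :=
  continuous_pi fun n => continuous_apply (n + 1)

lemma meas_any (S : Set A) : MeasurableSet S := (isOpen_discrete S).measurableSet

lemma clopen_cyl (I : List A) : IsClopen (cyl I) := by
  have : cyl I = ⋂ i : Fin I.length, (fun x : ℕ → A => x i) ⁻¹' {I.get i} := by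
    ext x; simp [cyl]
  rw [this]
  exact isClopen_iInter_of_finite fun i => (isClopen_discrete _).preimage (continuous_apply _)

lemma meas_cyl (I : List A) : MeasurableSet (cyl I) := by
  have : cyl I = ⋂ i : Fin I.length, (fun x : ℕ → A => x i) ⁻¹' {I.get i} := by
    ext x; simp [cyl]
  rw [this]
  exact MeasurableSet.iInter fun i => measurable_pi_apply _ (meas_any _)


/-- sets depending on the first `k` coordinates -/
def pre (k : ℕ) (W : Finset (Fin k → A)) : Set (ℕ → A) := {x | (fun i : Fin k => x i) ∈ W}

lemma part_gen (ν : Measure (ℕ → A)) [IsFiniteMeasure ν] (k m : ℕ) (W : Finset (Fin m → A))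
    (E : Set (ℕ → A)) :
    ∑ w ∈ W, ν.real (shiftMap^[k] ⁻¹' cyl (List.ofFn w) ∩ E) =
      ν.real (shiftMap^[k] ⁻¹' pre m W ∩ E) := by
  have hm : ∀ w : Fin m → A, MeasurableSet ((fun x : ℕ → A => fun i : Fin m => x (i + k)) ⁻¹' {w}) := by
    intro w
    have : ((fun x : ℕ → A => fun i : Fin m => x (i + k)) ⁻¹' {w}) =
      shiftMap^[k] ⁻¹' cyl (List.ofFn w) := by
      ext x; simp [mem_cyl_ofFn, shift_iter]
    rw [this]; exact meas_iter k (meas_cyl _)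
  have := sum_measureReal_preimage_singleton (μ := ν.restrict E) W
    (f := fun x : ℕ → A => fun i : Fin m => x (i + k)) (fun y _ => hm y)
  rw [measureReal_restrict_apply] at this
  · convert this using 2
    · rw [measureReal_restrict_apply (hm _)]
      congr 1; congr 1; ext x; simp [mem_cyl_ofFn, shift_iter]
    · congr 1; ext x; simp [pre, shift_iter]
  · have : ((fun x : ℕ → A => fun i : Fin m => x (i + k)) ⁻¹' (W : Set (Fin m → A))) =
      ⋃ w ∈ W, ((fun x : ℕ → A => fun i : Fin m => x (i + k)) ⁻¹' {w}) := by
      ext x; simp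
    rw [this]
    exact Finset.measurableSet_biUnion _ fun w _ => hm w

lemma part_pre (ν : Measure (ℕ → A)) [IsFiniteMeasure ν] (m : ℕ) (W : Finset (Fin m → A))
    (E : Set (ℕ → A)) :
    ∑ w ∈ W, ν.real (cyl (List.ofFn w) ∩ E) = ν.real (pre m W ∩ E) := part_gen ν 0 m W E

lemma part_all (ν : Measure (ℕ → A)) [IsFiniteMeasure ν] (k m : ℕ) (E : Set (ℕ → A)) :
    wS m (fun K => ν.real (shiftMap^[k] ⁻¹' cyl K ∩ E)) = ν.real E := by
  unfold wS
  rw [part_gen]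
  congr 1; ext x; simp [pre]

/-- gap sum -/
lemma gap_sum (ν : Measure (ℕ → A)) [IsFiniteMeasure ν] (m : ℕ) (I J : List A) :
    wS m (fun K => ν.real (cyl (I ++ K ++ J))) =
      ν.real (cyl I ∩ shiftMap^[I.length + m] ⁻¹' cyl J) := by
  rw [← part_all ν I.length m]
  refine wS_congr fun K hK => ?_
  rw [cyl_append, cyl_append, List.length_append, hK]
  congr 1; ext x; simp only [Set.mem_inter_iff]; tauto

lemma both_sum (ν : Measure (ℕ → A)) [IsFiniteMeasure ν] (m n : ℕ) (I : List A) :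
    fmn (fun J => ν.real (cyl J)) m n I = ν.real (shiftMap^[m] ⁻¹' cyl I) := by
  rw [fmn_eq]
  have : ∀ u : List A, wS n (fun v => ν.real (cyl (u ++ I ++ v))) = ν.real (cyl (u ++ I)) := by
    intro u
    rw [← part_all ν (u ++ I).length n]
    refine wS_congr fun K hK => ?_
    rw [cyl_append (u ++ I), Set.inter_comm]
  simp_rw [this]
  rw [← part_all ν 0 m]
  refine wS_congr fun u hu => ?_
  rw [cyl_append, hu]; rfl

lemma fmn_eta (f : List A → ℝ) (η : ℕ → Measure (ℕ → A)) (hηP : ∀ n, IsProbabilityMeasure (η n))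
    (hηf : ∀ n : ℕ, ∀ w : Fin n → A, ((η n) (cyl (List.ofFn w))).toReal = f (List.ofFn w))
    (m n : ℕ) (I : List A) :
    fmn f m n I = (η (m + I.length + n)).real (shiftMap^[m] ⁻¹' cyl I) := by
  have := hηP (m + I.length + n)
  rw [← both_sum _ m n]
  rw [fmn_eq, fmn_eq]
  refine wS_congr fun u hu => wS_congr fun v hv => ?_
  have hl : (u ++ I ++ v).length = m + I.length + n := by simp [hu, hv]; omega
  rw [← hl]
  have := hηf (u ++ I ++ v).length (fun i => (u ++ I ++ v).get i)
  rw [List.ofFn_get] at this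
  exact this.symm

lemma approx (ν : Measure (ℕ → A)) [IsFiniteMeasure ν] {S : Set (ℕ → A)} (hS : MeasurableSet S)
    {ε : ℝ} (hε : 0 < ε) : ∃ k, ∃ W : Finset (Fin k → A), ν.real (symmDiff (pre k W) S) < ε := by
  obtain ⟨t, ht, htS⟩ := exists_measure_symmDiff_lt_of_generateFrom_isSetRing (μ := ν)
    (C := measurableCylinders (fun _ : ℕ => A)) (isSetRing_measurableCylinders (α := fun _ : ℕ => A))
    ⟨{Set.univ}, Set.countable_singleton _, by
      simpa using univ_mem_measurableCylinders (fun _ : ℕ => A), by simp⟩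
    (generateFrom_measurableCylinders (α := fun _ : ℕ => A)).symm hS (ε := ENNReal.ofReal ε) (by simpa)
  rw [measurableCylinders_nat] at ht
  simp only [Set.mem_iUnion, Set.mem_singleton_iff] at ht
  obtain ⟨a, T, hT, rfl⟩ := ht
  refine ⟨a + 1, Finset.univ.filter (fun w => (fun i : Finset.Iic a => w ⟨i.1, by
    have := Finset.mem_Iic.1 i.2; omega⟩) ∈ T), ?_⟩
  have : pre (a + 1) (Finset.univ.filter (fun w : Fin (a+1) → A =>
    (fun i : Finset.Iic a => w ⟨i.1, by
    have := Finset.mem_Iic.1 i.2; omega⟩) ∈ T)) = cylinder (Finset.Iic a) T := by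
    ext x
    simp [pre, cylinder]
    rfl
  rw [this]
  exact (ENNReal.lt_ofReal_iff_toReal_lt (measure_ne_top _ _)).1 htS

lemma meas_pre (k : ℕ) (W : Finset (Fin k → A)) : MeasurableSet (pre k W) := by
  have : pre k W = ⋃ w ∈ W, cyl (List.ofFn w) := by
    ext x; simp [pre, mem_cyl_ofFn]
  rw [this]
  exact Finset.measurableSet_biUnion _ fun w _ => meas_cyl _

lemma abs_diff_le (ν : Measure (ℕ → A)) [IsFiniteMeasure ν] {S T : Set (ℕ → A)} :
    |ν.real S - ν.real T| ≤ ν.real (symmDiff S T) := by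
  rw [abs_le]
  have h1 : ν.real S ≤ ν.real (T ∪ symmDiff S T) := measureReal_mono (by
    intro x hx; by_cases h : x ∈ T
    · exact Or.inl h
    · exact Or.inr (Or.inl ⟨hx, h⟩))
  have h2 : ν.real T ≤ ν.real (S ∪ symmDiff S T) := measureReal_mono (by
    intro x hx; by_cases h : x ∈ S
    · exact Or.inl h
    · exact Or.inr (Or.inr ⟨hx, h⟩))
  have h3 := measureReal_union_le (μ := ν) T (symmDiff S T)
  have h4 := measureReal_union_le (μ := ν) S (symmDiff S T)
  constructor <;> linarith

/-- comparison on cylinders gives comparison on Borel sets -/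
lemma le_of_cyl (μ ν : Measure (ℕ → A)) [IsFiniteMeasure μ] [IsFiniteMeasure ν] {C : ℝ}
    (hC : 0 < C) (h : ∀ I, C * μ.real (cyl I) ≤ ν.real (cyl I)) {S : Set (ℕ → A)}
    (hS : MeasurableSet S) : C * μ.real S ≤ ν.real S := by
  refine le_of_forall_pos_le_add fun ε hε => ?_
  obtain ⟨k, W, hW⟩ := approx (μ + ν) hS (ε := ε / (C + 1)) (by positivity)
  rw [lt_div_iff₀ (by positivity), measureReal_add_apply] at hW
  have h1 := abs_le.1 (abs_diff_le μ (S := pre k W) (T := S))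
  have h2 := abs_le.1 (abs_diff_le ν (S := pre k W) (T := S))
  have h3 : C * μ.real (pre k W) ≤ ν.real (pre k W) := by
    have e1 := part_pre μ k W Set.univ
    have e2 := part_pre ν k W Set.univ
    simp only [Set.inter_univ] at e1 e2
    rw [← e1, ← e2, Finset.mul_sum]
    exact Finset.sum_le_sum fun w _ => h _
  have p1 := measureReal_nonneg (μ := μ) (s := symmDiff (pre k W) S)
  have p2 := measureReal_nonneg (μ := ν) (s := symmDiff (pre k W) S)
  nlinarith

lemma eq_of_cyl (μ ν : Measure (ℕ → A)) [IsFiniteMeasure μ] [IsFiniteMeasure ν]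
    (h : ∀ I, μ.real (cyl I) = ν.real (cyl I)) : μ = ν := by
  ext S hS
  have h1 := le_of_cyl μ ν one_pos (fun I => by rw [one_mul]; exact (h I).le) hS
  have h2 := le_of_cyl ν μ one_pos (fun I => by rw [one_mul]; exact (h I).ge) hS
  rw [one_mul] at h1 h2
  exact (measureReal_eq_measureReal_iff).1 (le_antisymm h1 h2)

end Cyl

/-! ### Limits -/
section Lim
set_option linter.unusedSectionVars false

lemma cesaro (l : Filter ℕ) [NeBot l] (hl : l ≤ atTop) (a : ℕ → ℕ → ℝ) (t : ℝ) (s : ℕ)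
    (h0 : ∀ N i, 0 ≤ a N i) (ht : t ≤ 1)
    (h : ∀ N i, s ≤ i → i + s ≤ N → t ≤ a N i) (L : ℝ)
    (hL : Tendsto (fun N : ℕ => (N : ℝ)⁻¹ * ∑ i ∈ Finset.range N, a N i) l (𝓝 L)) : t ≤ L := by
  have h1 : Tendsto (fun N : ℕ => t - (2 * s : ℝ) / N) atTop (𝓝 (t - 0)) :=
    tendsto_const_nhds.sub (tendsto_const_div_atTop_nhds_zero_nat _)
  rw [sub_zero] at h1
  refine le_of_tendsto_of_tendsto (h1.mono_left hl) hL ?_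
  filter_upwards [hl (eventually_ge_atTop 1)] with N hN
  have hN' : (0:ℝ) < N := by exact_mod_cast hN
  have h2 : ∑ i ∈ Finset.range N, (t - (if i < s then (1:ℝ) else 0) - (if N < i + s then (1:ℝ) else 0))
      ≤ ∑ i ∈ Finset.range N, a N i := by
    refine Finset.sum_le_sum fun i _ => ?_
    by_cases h3 : i < s
    · have := h0 N i; split_ifs <;> linarith
    · by_cases h4 : N < i + s
      · have := h0 N i; split_ifs; linarith
      · have := h N i (by omega) (by omega); split_ifs; linarith
  rw [Finset.sum_sub_distrib, Finset.sum_sub_distrib, Finset.sum_boole, Finset.sum_boole] at h2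
  have c1 : (((Finset.range N).filter (fun i => i < s)).card : ℝ) ≤ s := by
    have : ((Finset.range N).filter (fun i => i < s)) ⊆ Finset.range s := by
      intro x; simp
    exact_mod_cast (Finset.card_le_card this).trans (by simp)
  have c2 : (((Finset.range N).filter (fun i => N < i + s)).card : ℝ) ≤ s := by
    have : ((Finset.range N).filter (fun i => N < i + s)) ⊆ Finset.Ico (N - s) N := by
      intro x; simp; omega
    exact_mod_cast (Finset.card_le_card this).trans (by simp; omega)
  simp only [Finset.sum_const, Finset.card_range, nsmul_eq_mul] at h2
  rw [inv_mul_eq_div, le_div_iff₀ hN', sub_mul, div_mul_cancel₀ _ hN'.ne']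
  linarith

variable {A : Type} [Fintype A] [TopologicalSpace A]
    [DiscreteTopology A] [MeasurableSpace A] [BorelSpace A]

structure Setup (f : List A → ℝ) (η : ℕ → Measure (ℕ → A)) (μseq : ℕ → Measure (ℕ → A))
    (l : Filter ℕ) (μ : Measure (ℕ → A)) : Prop where
  hηP : ∀ n, IsProbabilityMeasure (η n)
  hηf : ∀ n : ℕ, ∀ w : Fin n → A, ((η n) (cyl (List.ofFn w))).toReal = f (List.ofFn w)
  hμseq : ∀ n, μseq n = (n : ℝ≥0∞)⁻¹ • ∑ i ∈ Finset.range n, (η n).map (shiftMap^[i])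
  ne : NeBot l
  le : l ≤ atTop
  hμP : IsProbabilityMeasure μ
  hconv : ∀ g : (ℕ → A) → ℝ, Continuous g →
      Tendsto (fun i : ℕ => ∫ x, g x ∂(μseq i)) l (nhds (∫ x, g x ∂μ))

variable {f : List A → ℝ} {η : ℕ → Measure (ℕ → A)} {μseq : ℕ → Measure (ℕ → A)}
    {l : Filter ℕ} {μ : Measure (ℕ → A)}

lemma clopen_meas {E : Set (ℕ → A)} (hE : IsClopen E) : MeasurableSet E := by
  have : BorelSpace (ℕ → A) := inferInstance
  exact hE.isOpen.measurableSet

lemma Setup.tendsto (h : Setup f η μseq l μ) {E : Set (ℕ → A)} (hE : IsClopen E) :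
    Tendsto (fun N : ℕ => (N : ℝ)⁻¹ * ∑ i ∈ Finset.range N, (η N).real (shiftMap^[i] ⁻¹' E)) l
      (𝓝 (μ.real E)) := by
  have hm := clopen_meas hE
  have := h.hconv (E.indicator 1) (hE.continuous_indicator continuous_one)
  simp only [integral_indicator_one hm] at this
  refine this.congr fun N => ?_
  have hp := h.hηP N
  rw [h.hμseq, measureReal_def, Measure.smul_apply, Measure.finsetSum_apply, smul_eq_mul,
    ENNReal.toReal_mul, ENNReal.toReal_inv, ENNReal.toReal_natCast]
  congr 1
  simp_rw [Measure.map_apply (meas_iter _) hm]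
  rw [ENNReal.toReal_sum (fun i _ => measure_ne_top _ _)]
  rfl

lemma Setup.fmn_le_one (h : Setup f η μseq l μ) (m n : ℕ) (I : List A) : fmn f m n I ≤ 1 := by
  have := h.hηP (m + I.length + n)
  rw [fmn_eta f η h.hηP h.hηf]; exact measureReal_le_one

lemma Setup.lower (h : Setup f η μseq l μ) {p : ℕ} {D : ℝ} (hg : Good p f D) (m n : ℕ)
    (I : List A) : D ^ 2 * fmn f m n I ≤ μ.real (cyl I) := by
  have := h.ne
  refine cesaro l h.le _ _ (m + n + p + I.length) (fun N i => measureReal_nonneg) ?_ ?_ _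
    (h.tendsto (clopen_cyl I))
  · exact (hg.fmn_le le_rfl le_rfl I).trans (h.fmn_le_one _ _ _)
  · intro N i h1 h2
    have := fmn_eta f η h.hηP h.hηf i (N - i - I.length) I
    rw [show i + I.length + (N - i - I.length) = N by omega] at this
    rw [← this]
    exact hg.fmn_le (by omega) (by omega) I

lemma Setup.upper (h : Setup f η μseq l μ) {t : ℝ} (ht : 0 ≤ t) (I : List A)
    (hI : ∀ m n, fmn f m n I ≤ t) : μ.real (cyl I) ≤ t := by
  have := h.ne
  suffices 1 - t ≤ 1 - μ.real (cyl I) by linarith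
  refine cesaro l h.le (fun N i => 1 - (η N).real (shiftMap^[i] ⁻¹' cyl I)) _ I.length
    (fun N i => ?_) (by linarith) ?_ _ ?_
  · have := h.hηP N
    exact sub_nonneg.2 measureReal_le_one
  · intro N i h1 h2
    have := fmn_eta f η h.hηP h.hηf i (N - i - I.length) I
    rw [show i + I.length + (N - i - I.length) = N by omega] at this
    rw [← this]
    linarith [hI i (N - i - I.length)]
  · refine (tendsto_const_nhds.sub (h.tendsto (clopen_cyl I))).congr' ?_
    filter_upwards [h.le (eventually_ge_atTop 1)] with N hN
    have hN' : (0:ℝ) < N := by exact_mod_cast hN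
    rw [Finset.sum_sub_distrib]
    simp only [Finset.sum_const, Finset.card_range, nsmul_eq_mul, mul_one, mul_sub]
    rw [inv_mul_cancel₀ hN'.ne']

lemma Setup.inv (h : Setup f η μseq l μ) : μ.map shiftMap = μ := by
  have := h.ne
  have := h.hμP
  have := Measure.isFiniteMeasure_map μ (shiftMap : (ℕ → A) → (ℕ → A))
  refine eq_of_cyl _ _ fun I => ?_
  rw [map_measureReal_apply meas_shift (meas_cyl I)]
  have h1 := h.tendsto (clopen_cyl I)
  have h2 := h.tendsto ((clopen_cyl I).preimage cont_shift)
  have h3 : Tendsto (fun N : ℕ => (N : ℝ)⁻¹ * ((η N).real (shiftMap^[N] ⁻¹' cyl I) -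
      (η N).real (shiftMap^[0] ⁻¹' cyl I))) l (𝓝 0) := by
    refine squeeze_zero_norm' (a := fun N : ℕ => (1:ℝ) / N) ?_
      ((tendsto_const_div_atTop_nhds_zero_nat _).mono_left h.le)
    refine Eventually.of_forall fun N => ?_
    have := h.hηP N
    rw [norm_mul, norm_inv, Real.norm_natCast, inv_mul_eq_div]
    gcongr
    rw [Real.norm_eq_abs, abs_le]
    have a1 := measureReal_nonneg (μ := η N) (s := shiftMap^[N] ⁻¹' cyl I)
    have a2 := measureReal_nonneg (μ := η N) (s := shiftMap^[0] ⁻¹' cyl I)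
    have a3 := measureReal_le_one (μ := η N) (s := shiftMap^[N] ⁻¹' cyl I)
    have a4 := measureReal_le_one (μ := η N) (s := shiftMap^[0] ⁻¹' cyl I)
    constructor <;> linarith
  refine tendsto_nhds_unique h2 ?_
  have h4 := h1.add h3
  rw [add_zero] at h4
  refine h4.congr fun N => ?_
  rw [← Finset.sum_range_sub (fun i => (η N).real (shiftMap^[i] ⁻¹' cyl I)), ← mul_add,
    ← Finset.sum_add_distrib]
  congr 1
  refine Finset.sum_congr rfl fun i _ => ?_
  rw [← Set.preimage_comp, ← Function.iterate_succ']
  ring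

lemma Setup.exists_fmn (h : Setup f η μseq l μ) (hf : ∀ I, 0 ≤ f I) (I : List A) :
    ∃ m n, μ.real (cyl I) / 2 ≤ fmn f m n I := by
  by_contra hc
  push Not at hc
  have h0 := measureReal_nonneg (μ := μ) (s := cyl I)
  have := h.upper (t := μ.real (cyl I) / 2) (by positivity) I fun m n => (hc m n).le
  have h1 := hc 0 0
  have h2 := fmn_nonneg hf 0 0 I
  linarith

lemma Setup.cylmix (h : Setup f η μseq l μ) {p : ℕ} {D : ℝ} (hg : Good p f D) {F : Finset ℕ}
    {c : ℝ} (hc : 0 < c)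
    (hF : ∀ I J : List A, ∃ K : List A, K.length ∈ F ∧ c * (f I * f J) ≤ f (I ++ K ++ J))
    (I J : List A) : ∀ᶠ n in atTop, (D ^ 4 * c / 4) * (μ.real (cyl I) * μ.real (cyl J)) ≤
      ∑ i ∈ F, μ.real (cyl I ∩ shiftMap^[n + i] ⁻¹' cyl J) := by
  have := h.hμP
  obtain ⟨m1, n1, h1⟩ := h.exists_fmn hg.nonneg I
  obtain ⟨m2, n2, h2⟩ := h.exists_fmn hg.nonneg J
  have hD := hg.pos
  filter_upwards [eventually_ge_atTop (I.length + n1 + m2 + p)] with n hn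
  obtain ⟨q, hq⟩ := Nat.exists_eq_add_of_le (show I.length + n1 ≤ n by omega)
  have h3 := hg.fmn_le (show m2 + p ≤ q by omega) (le_refl (n2 + p)) J
  set r := n2 + p
  have hsub : ∀ W V : List A, c * (f W * f V) ≤ ∑ i ∈ F, wS i (fun K => f (W ++ K ++ V)) := by
    intro W V
    obtain ⟨K, hK, hK2⟩ := hF W V
    refine hK2.trans ((wS_single (g := fun K => f (W ++ K ++ V)) (fun _ => hg.nonneg _) K).trans ?_)
    exact Finset.single_le_sum (f := fun i => wS i (fun K => f (W ++ K ++ V)))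
      (fun i _ => wS_nonneg fun _ => hg.nonneg _) hK
  have key : c * (fmn f m1 n1 I * fmn f q r J) ≤
      ∑ i ∈ F, wS (n1 + i + q) (fun K => fmn f m1 r (I ++ K ++ J)) := by
    calc c * (fmn f m1 n1 I * fmn f q r J) =
        wS m1 (fun x => wS n1 (fun v => wS q (fun u => wS r (fun y =>
          c * (f (x ++ I ++ v) * f (u ++ J ++ y)))))) := by
          simp only [wS_mul, wS_mul_right, fmn_eq]
      _ ≤ wS m1 (fun x => wS n1 (fun v => wS q (fun u => wS r (fun y =>
          ∑ i ∈ F, wS i (fun K => f ((x ++ I ++ v) ++ K ++ (u ++ J ++ y))))))) :=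
          wS_mono fun x _ => wS_mono fun v _ => wS_mono fun u _ => wS_mono fun y _ => hsub _ _
      _ = _ := ?_
    simp only [wS_sum]
    refine Finset.sum_congr rfl fun i _ => ?_
    rw [wS_add, wS_add, wS_comm m1]
    refine wS_congr fun v _ => ?_
    have e1 : ∀ x : List A, wS q (fun u => wS r (fun y => wS i (fun K =>
        f ((x ++ I ++ v) ++ K ++ (u ++ J ++ y))))) =
        wS i (fun K => wS q (fun u => wS r (fun y => f ((x ++ I ++ v) ++ K ++ (u ++ J ++ y))))) := by
      intro x
      rw [wS_comm i]
      refine wS_congr fun u _ => ?_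
      rw [wS_comm]
    simp only [e1]
    rw [wS_comm m1]
    refine wS_congr fun K _ => ?_
    rw [wS_comm m1]
    refine wS_congr fun u _ => ?_
    simp only [fmn_eq, List.append_assoc]
  have key2 : D ^ 2 * ∑ i ∈ F, wS (n1 + i + q) (fun K => fmn f m1 r (I ++ K ++ J)) ≤
      ∑ i ∈ F, μ.real (cyl I ∩ shiftMap^[n + i] ⁻¹' cyl J) := by
    rw [Finset.mul_sum]
    refine Finset.sum_le_sum fun i _ => ?_
    rw [show n + i = I.length + (n1 + i + q) by omega, ← gap_sum, ← wS_mul]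
    exact wS_mono fun K _ => h.lower hg _ _ _
  refine le_trans ?_ key2
  have a1 := measureReal_nonneg (μ := μ) (s := cyl I)
  have a2 := measureReal_nonneg (μ := μ) (s := cyl J)
  have h4 : D ^ 2 * (μ.real (cyl J) / 2) ≤ fmn f q r J :=
    (mul_le_mul_of_nonneg_left h2 (by positivity)).trans h3
  have h5 : (μ.real (cyl I) / 2) * (D ^ 2 * (μ.real (cyl J) / 2)) ≤ fmn f m1 n1 I * fmn f q r J :=
    mul_le_mul h1 h4 (by positivity) (fmn_nonneg hg.nonneg _ _ _)
  calc _ = D ^ 2 * (c * ((μ.real (cyl I) / 2) * (D ^ 2 * (μ.real (cyl J) / 2)))) := by ring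
    _ ≤ D ^ 2 * (c * (fmn f m1 n1 I * fmn f q r J)) := by gcongr
    _ ≤ _ := by gcongr

lemma real_pre_iter [IsProbabilityMeasure μ] (hinv : μ.map shiftMap = μ) (n : ℕ) {T : Set (ℕ → A)}
    (hT : MeasurableSet T) : μ.real (shiftMap^[n] ⁻¹' T) = μ.real T := by
  have hp : MeasurePreserving shiftMap μ μ := ⟨meas_shift, hinv⟩
  exact (hp.iterate n).measureReal_preimage hT.nullMeasurableSet

lemma mix_borel [IsProbabilityMeasure μ] (hinv : μ.map shiftMap = μ) {F : Finset ℕ} {C : ℝ}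
    (hC : 0 < C)
    (h : ∀ I J : List A, ∀ᶠ n in atTop, C * (μ.real (cyl I) * μ.real (cyl J)) ≤
      ∑ i ∈ F, μ.real (cyl I ∩ shiftMap^[n + i] ⁻¹' cyl J))
    {S T : Set (ℕ → A)} (hS : MeasurableSet S) (hT : MeasurableSet T) :
    C * (μ.real S * μ.real T) ≤
      liminf (fun n : ℕ => ∑ i ∈ F, μ.real (S ∩ shiftMap^[n + i] ⁻¹' T)) atTop := by
  refine le_of_forall_pos_le_add fun ε hε => ?_
  rw [← sub_le_iff_le_add]
  obtain ⟨δ, hδ, hδε⟩ : ∃ δ : ℝ, 0 < δ ∧ (2 * C + 2 * F.card) * δ ≤ ε :=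
    ⟨ε / (2 * C + 2 * F.card), by positivity, by rw [mul_div_cancel₀]; positivity⟩
  obtain ⟨k, W, hW⟩ := approx μ hS hδ
  obtain ⟨k', W', hW'⟩ := approx μ hT hδ
  have ev : ∀ᶠ n in atTop, ∀ w ∈ W, ∀ w' ∈ W',
      C * (μ.real (cyl (List.ofFn w)) * μ.real (cyl (List.ofFn w'))) ≤
      ∑ i ∈ F, μ.real (cyl (List.ofFn w) ∩ shiftMap^[n + i] ⁻¹' cyl (List.ofFn w')) := by
    rw [Filter.eventually_all_finset]
    intro w _
    rw [Filter.eventually_all_finset]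
    intro w' _
    exact h _ _
  refine le_liminf_of_le ?_ ?_
  · refine IsBoundedUnder.isCoboundedUnder_ge ⟨(F.card : ℝ), ?_⟩
    rw [eventually_map]
    refine Eventually.of_forall fun n => ?_
    calc _ ≤ ∑ i ∈ F, (1:ℝ) := Finset.sum_le_sum fun i _ => measureReal_le_one
      _ = _ := by simp
  filter_upwards [ev] with n hn
  have e1 : C * (μ.real (pre k W) * μ.real (pre k' W')) ≤
      ∑ i ∈ F, μ.real (pre k W ∩ shiftMap^[n + i] ⁻¹' pre k' W') := by
    have a1 := part_pre μ k W Set.univ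
    have a2 := part_pre μ k' W' Set.univ
    simp only [Set.inter_univ] at a1 a2
    have a3 : ∀ i, μ.real (pre k W ∩ shiftMap^[n + i] ⁻¹' pre k' W') = ∑ w ∈ W, ∑ w' ∈ W',
        μ.real (cyl (List.ofFn w) ∩ shiftMap^[n + i] ⁻¹' cyl (List.ofFn w')) := by
      intro i
      rw [← part_pre]
      refine Finset.sum_congr rfl fun w _ => ?_
      rw [Set.inter_comm, ← part_gen]
      refine Finset.sum_congr rfl fun w' _ => ?_
      rw [Set.inter_comm]
    simp_rw [a3]
    rw [← a1, ← a2, Finset.sum_mul_sum, Finset.mul_sum, Finset.sum_comm]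
    refine Finset.sum_le_sum fun w hw => ?_
    rw [Finset.mul_sum, Finset.sum_comm]
    exact Finset.sum_le_sum fun w' hw' => hn w hw w' hw'
  have e2 : ∀ i ∈ F, μ.real (pre k W ∩ shiftMap^[n + i] ⁻¹' pre k' W') ≤
      μ.real (S ∩ shiftMap^[n + i] ⁻¹' T) + 2 * δ := by
    intro i _
    have b0 := real_pre_iter hinv (n + i) (T := symmDiff (pre k' W') T)
      ((meas_pre k' W').symmDiff hT)
    have b1 : μ.real (pre k W ∩ shiftMap^[n + i] ⁻¹' pre k' W') ≤
        μ.real ((S ∩ shiftMap^[n + i] ⁻¹' T) ∪ (symmDiff (pre k W) S ∪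
          shiftMap^[n + i] ⁻¹' (symmDiff (pre k' W') T))) := by
      refine measureReal_mono ?_
      rintro x ⟨hx1, hx2⟩
      by_cases g1 : x ∈ S
      · by_cases g2 : shiftMap^[n+i] x ∈ T
        · exact Or.inl ⟨g1, g2⟩
        · exact Or.inr (Or.inr (Or.inl ⟨hx2, g2⟩))
      · exact Or.inr (Or.inl (Or.inl ⟨hx1, g1⟩))
    have b2 := measureReal_union_le (μ := μ) (S ∩ shiftMap^[n + i] ⁻¹' T) (symmDiff (pre k W) S ∪
          shiftMap^[n + i] ⁻¹' (symmDiff (pre k' W') T))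
    have b3 := measureReal_union_le (μ := μ) (symmDiff (pre k W) S)
      (shiftMap^[n + i] ⁻¹' (symmDiff (pre k' W') T))
    linarith
  have e3 := Finset.sum_le_sum e2
  rw [Finset.sum_add_distrib, Finset.sum_const, nsmul_eq_mul] at e3
  have f1 := abs_le.1 (abs_diff_le μ (S := pre k W) (T := S))
  have f2 := abs_le.1 (abs_diff_le μ (S := pre k' W') (T := T))
  have e4 : μ.real S * μ.real T ≤ μ.real (pre k W) * μ.real (pre k' W') + 2 * δ := by
    have g1 : μ.real S ≤ 1 := measureReal_le_one
    have g2 : μ.real (pre k' W') ≤ 1 := measureReal_le_one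
    have g3 := measureReal_nonneg (μ := μ) (s := S)
    have g4 := measureReal_nonneg (μ := μ) (s := pre k' W')
    have k1 : μ.real S * (μ.real T - μ.real (pre k' W')) ≤ 1 * δ := by
      refine (mul_le_mul_of_nonneg_left (show _ ≤ δ by linarith) g3).trans ?_
      exact mul_le_mul_of_nonneg_right g1 hδ.le
    have k2 : (μ.real S - μ.real (pre k W)) * μ.real (pre k' W') ≤ δ * 1 := by
      refine (mul_le_mul_of_nonneg_right (show _ ≤ δ by linarith) g4).trans ?_
      exact mul_le_mul_of_nonneg_left g2 hδ.le
    nlinarith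
  have e5 := mul_le_mul_of_nonneg_left e4 hC.le
  nlinarith

lemma ergodic_of_mix [IsProbabilityMeasure μ] (hinv : μ.map shiftMap = μ) {F : Finset ℕ} {C : ℝ}
    (hC : 0 < C)
    (h : ∀ S T : Set (ℕ → A), MeasurableSet S → MeasurableSet T → C * (μ.real S * μ.real T) ≤
      liminf (fun n : ℕ => ∑ i ∈ F, μ.real (S ∩ shiftMap^[n + i] ⁻¹' T)) atTop) :
    Ergodic shiftMap μ := by
  refine ⟨⟨meas_shift, hinv⟩, ⟨fun S hS hSS => ?_⟩⟩
  have h1 := h S Sᶜ hS hS.compl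
  have h2 : ∀ k, shiftMap^[k] ⁻¹' Sᶜ = Sᶜ := by
    intro k
    rw [Set.preimage_compl]
    congr 1
    induction k with
    | zero => rfl
    | succ k ih => rw [Function.iterate_succ', Set.preimage_comp, hSS, ih]
  simp only [h2, Set.inter_compl_self, measureReal_empty, Finset.sum_const_zero] at h1
  rw [liminf_const] at h1
  have h3 : μ.real S * μ.real Sᶜ = 0 := le_antisymm
    (by by_contra hh; push Not at hh; have := mul_pos hC hh; linarith)
    (mul_nonneg measureReal_nonneg measureReal_nonneg)
  rw [eventuallyConst_set]
  rcases mul_eq_zero.1 h3 with h4 | h4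
  · right
    rw [measureReal_eq_zero_iff] at h4
    exact measure_eq_zero_iff_ae_notMem.1 h4
  · left
    rw [measureReal_eq_zero_iff] at h4
    filter_upwards [measure_eq_zero_iff_ae_notMem.1 h4] with x hx
    simpa using hx

lemma Setup.gibbs (h : Setup f η μseq l μ) {p : ℕ} {D : ℝ} (hg : Good p f D) (I : List A) :
    D ^ 2 * fstar f I ≤ μ.real (cyl I) ∧ μ.real (cyl I) ≤ fstar f I := by
  have hb : ∀ m, BddAbove (Set.range fun n => fmn f m n I) := fun m =>
    ⟨1, by rintro _ ⟨n, rfl⟩; exact h.fmn_le_one _ _ _⟩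
  have hb2 : BddAbove (Set.range fun m => ⨆ n, fmn f m n I) :=
    ⟨1, by rintro _ ⟨n, rfl⟩; exact ciSup_le fun _ => h.fmn_le_one _ _ _⟩
  have hD := hg.pos
  constructor
  · rw [mul_comm, ← le_div_iff₀ (by positivity)]
    refine ciSup_le fun m => ciSup_le fun n => ?_
    rw [le_div_iff₀ (by positivity), mul_comm]
    exact h.lower hg m n I
  · have hle : ∀ m n, fmn f m n I ≤ fstar f I := fun m n =>
      (le_ciSup (hb m) n).trans (le_ciSup hb2 m)
    exact h.upper ((fmn_nonneg hg.nonneg 0 0 I).trans (hle 0 0)) I hle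

lemma Setup.unique (h : Setup f η μseq l μ) (μ' : Measure (ℕ → A))
    [IsProbabilityMeasure μ'] (he : Ergodic shiftMap μ') (hf : ∀ I, 0 ≤ f I) {C : ℝ} (hC : 0 < C)
    (hCf : ∀ I, C * f I ≤ μ'.real (cyl I)) : μ' = μ := by
  have := h.hμP
  have h1 : ∀ I, C * μ.real (cyl I) ≤ μ'.real (cyl I) := by
    intro I
    rw [mul_comm, ← le_div_iff₀ hC]
    refine h.upper (by positivity) I fun m n => ?_
    rw [le_div_iff₀ hC, mul_comm, ← real_pre_iter he.map_eq m (meas_cyl I), ← both_sum μ' m n,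
      fmn_eq, fmn_eq, ← wS_mul]
    refine wS_mono fun u _ => ?_
    rw [← wS_mul]
    exact wS_mono fun v _ => hCf _
  have h2 : μ ≪ μ' := by
    refine Measure.AbsolutelyContinuous.mk fun S hS h0 => ?_
    have h3 := le_of_cyl μ μ' hC h1 hS
    have h4 : μ'.real S = 0 := by simp [measureReal_def, h0]
    rw [h4] at h3
    have h5 := measureReal_nonneg (μ := μ) (s := S)
    have : μ.real S = 0 := by nlinarith
    rwa [measureReal_eq_zero_iff] at this
  exact (he.eq_of_absolutelyContinuous ⟨meas_shift, h.inv⟩ h2).symm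

lemma exists_good {p : ℕ} (hf : OmegaW p f ∨ OmegaS p f) : ∃ D, Good p f D := by
  rcases hf with h | h
  · exact good_of_W h
  · exact good_of_S h

lemma Setup.mix (h : Setup f η μseq l μ) {p : ℕ} (hf : OmegaW p f ∨ OmegaS p f) :
    ∃ C > (0:ℝ), ∀ S T : Set (ℕ → A), MeasurableSet S → MeasurableSet T →
      C * (μ.real S * μ.real T) ≤
      liminf (fun n : ℕ => ∑ i ∈ Finset.range (p+1), μ.real (S ∩ shiftMap^[n + i] ⁻¹' T)) atTop := by
  have := h.hμP
  obtain ⟨D, hg⟩ := exists_good hf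
  have hD := hg.pos
  obtain ⟨c, hc, hF⟩ : ∃ c > (0:ℝ), ∀ I J : List A, ∃ K : List A,
      K.length ∈ Finset.range (p+1) ∧ c * (f I * f J) ≤ f (I ++ K ++ J) := by
    rcases hf with ⟨_, c, hc, _, h2, _⟩ | ⟨_, c, hc, _, h2⟩
    · refine ⟨c, hc, fun I J => ?_⟩
      obtain ⟨K, hK, hK2⟩ := h2 I J
      exact ⟨K, Finset.mem_range.2 (by omega), hK2⟩
    · refine ⟨c, hc, fun I J => ?_⟩
      obtain ⟨K, hK, hK2⟩ := h2 I J
      exact ⟨K, Finset.mem_range.2 (by omega), hK2⟩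
  have hC : 0 < D ^ 4 * c / 4 := by positivity
  exact ⟨_, hC, fun S T hS hT => mix_borel h.inv hC (h.cylmix hg hc hF) hS hT⟩

lemma Setup.ergodic (h : Setup f η μseq l μ) {p : ℕ} (hf : OmegaW p f ∨ OmegaS p f) :
    Ergodic shiftMap μ := by
  have := h.hμP
  obtain ⟨C, hC, hm⟩ := h.mix hf
  exact ergodic_of_mix h.inv hC hm

lemma Setup.mixS (h : Setup f η μseq l μ) {p : ℕ} (hf : OmegaS p f) :
    ∃ C > (0:ℝ), ∀ S T : Set (ℕ → A), MeasurableSet S → MeasurableSet T →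
      C * (μ.real S * μ.real T) ≤
      liminf (fun n : ℕ => μ.real (S ∩ shiftMap^[n] ⁻¹' T)) atTop := by
  have := h.hμP
  obtain ⟨D, hg⟩ := good_of_S hf
  have hD := hg.pos
  obtain ⟨_, c, hc, _, h2⟩ := hf
  have hC : 0 < D ^ 4 * c / 4 := by positivity
  refine ⟨_, hC, fun S T hS hT => ?_⟩
  have := mix_borel (F := {p}) h.inv hC (h.cylmix hg hc fun I J => by
    obtain ⟨K, hK, hK2⟩ := h2 I J
    exact ⟨K, by simp [hK], hK2⟩) hS hT
  simp only [Finset.sum_singleton] at this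
  rwa [liminf_nat_add (fun n : ℕ => μ.real (S ∩ shiftMap^[n] ⁻¹' T)) p] at this

lemma Setup.full (h : Setup f η μseq l μ) {p : ℕ} (hf : OmegaW p f ∨ OmegaS p f)
    (g : (ℕ → A) → ℝ) (hgc : Continuous g) :
      Tendsto (fun n : ℕ => ∫ x, g x ∂(μseq n)) atTop (nhds (∫ x, g x ∂μ)) := by
  have := h.hμP
  obtain ⟨D, hg⟩ := exists_good hf
  have hpm : ∀ n : ℕ, 1 ≤ n → IsProbabilityMeasure (μseq n) := by
    intro n hn
    constructor
    have := h.hηP n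
    rw [h.hμseq, Measure.smul_apply, Measure.finsetSum_apply]
    simp_rw [Measure.map_apply (meas_iter _) MeasurableSet.univ]
    simp only [Set.preimage_univ, measure_univ, Finset.sum_const, Finset.card_range,
      nsmul_eq_mul, mul_one, smul_eq_mul]
    exact ENNReal.inv_mul_cancel (by simp; omega) (by simp)
  let P : ℕ → ProbabilityMeasure (ℕ → A) := fun n =>
    if hn : 1 ≤ n then ⟨μseq n, hpm n hn⟩ else ⟨μ, h.hμP⟩
  have hP : ∀ n, 1 ≤ n → (P n : Measure (ℕ → A)) = μseq n := by
    intro n hn; simp [P, hn]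
  rw [tendsto_iff_ultrafilter]
  intro U hU
  have hlim := (U.map P).le_nhds_lim
  set ν := (U.map P).lim
  have ht : Tendsto P (U : Filter ℕ) (𝓝 ν) := hlim
  rw [ProbabilityMeasure.tendsto_iff_forall_integral_tendsto] at ht
  have hcv : ∀ g : (ℕ → A) → ℝ, Continuous g →
      Tendsto (fun i : ℕ => ∫ x, g x ∂(μseq i)) U (nhds (∫ x, g x ∂(ν : Measure (ℕ → A)))) := by
    intro g hgc
    refine (ht (BoundedContinuousFunction.mkOfCompact ⟨g, hgc⟩)).congr' ?_
    filter_upwards [hU (eventually_ge_atTop 1)] with n hn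
    rw [hP n hn]; rfl
  have hs : Setup f η μseq (U : Filter ℕ) (ν : Measure (ℕ → A)) :=
    ⟨h.hηP, h.hηf, h.hμseq, U.neBot, hU, inferInstance, hcv⟩
  have heq : (ν : Measure (ℕ → A)) = μ := by
    refine h.unique _ (hs.ergodic hf) hg.nonneg (C := D ^ 2) (by have := hg.pos; positivity) ?_
    intro I
    have := hs.lower hg 0 0 I
    rwa [fmn_zero] at this
  rw [← heq]
  exact hcv g hgc

end Lim

/-- Proposition 4.1 / `pro-t1`: the ergodic measure associated with a function
`f ∈ Ω_w(A*,p) ∪ Ω(A*,p)` on the full shift, with its Gibbs-type bounds, mixing-type bounds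
and uniqueness properties. -/
theorem weighted_eq_states_stmt_9 {A : Type} [Fintype A] [TopologicalSpace A]
    [DiscreteTopology A] [MeasurableSpace A] [BorelSpace A]
    (p : ℕ) (f : List A → ℝ) (hf : OmegaW p f ∨ OmegaS p f)
    (η : ℕ → Measure (ℕ → A)) (hηP : ∀ n, IsProbabilityMeasure (η n))
    (hηf : ∀ n : ℕ, ∀ w : Fin n → A, ((η n) (cyl (List.ofFn w))).toReal = f (List.ofFn w))
    (μseq : ℕ → Measure (ℕ → A))
    (hμseq : ∀ n, μseq n = (n : ℝ≥0∞)⁻¹ • ∑ i ∈ Finset.range n, (η n).map (shiftMap^[i]))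
    (ns : ℕ → ℕ) (hns : StrictMono ns)
    (μ : Measure (ℕ → A)) (hμP : IsProbabilityMeasure μ)
    (hconv : ∀ g : (ℕ → A) → ℝ, Continuous g →
      Tendsto (fun i : ℕ => ∫ x, g x ∂(μseq (ns i))) atTop (nhds (∫ x, g x ∂μ))) :
    μ.map shiftMap = μ ∧
    (∃ C₁ > (0:ℝ), ∀ I : List A,
      C₁ * fstar f I ≤ (μ (cyl I)).toReal ∧ (μ (cyl I)).toReal ≤ fstar f I) ∧
    (∃ C₂ > (0:ℝ), ∀ S T : Set (ℕ → A), MeasurableSet S → MeasurableSet T →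
      C₂ * ((μ S).toReal * (μ T).toReal) ≤
        liminf (fun n : ℕ => ∑ i ∈ Finset.range (p+1),
          (μ (S ∩ shiftMap^[n+i] ⁻¹' T)).toReal) atTop) ∧
    Ergodic shiftMap μ ∧
    ((∃ C₃ > (0:ℝ), ∀ I : List A, C₃ * f I ≤ (μ (cyl I)).toReal) ∧
      (∀ μ' : Measure (ℕ → A), IsProbabilityMeasure μ' → μ'.map shiftMap = μ' →
        Ergodic shiftMap μ' →
        (∃ C₃ > (0:ℝ), ∀ I : List A, C₃ * f I ≤ (μ' (cyl I)).toReal) → μ' = μ)) ∧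
    (∀ g : (ℕ → A) → ℝ, Continuous g →
      Tendsto (fun n : ℕ => ∫ x, g x ∂(μseq n)) atTop (nhds (∫ x, g x ∂μ))) ∧
    (OmegaS p f → ∃ C₄ > (0:ℝ), ∀ S T : Set (ℕ → A), MeasurableSet S → MeasurableSet T →
      C₄ * ((μ S).toReal * (μ T).toReal) ≤
        liminf (fun n : ℕ => (μ (S ∩ shiftMap^[n] ⁻¹' T)).toReal) atTop) := by
  have h : Setup f η μseq (map ns atTop) μ :=
    ⟨hηP, hηf, hμseq, inferInstance, hns.tendsto_atTop, hμP,
      fun g hg => tendsto_map'_iff.2 (hconv g hg)⟩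
  obtain ⟨D, hg⟩ := exists_good hf
  have hD := hg.pos
  refine ⟨h.inv, ⟨D ^ 2, by positivity, fun I => h.gibbs hg I⟩, h.mix hf, h.ergodic hf,
    ⟨⟨D ^ 2, by positivity, fun I => ?_⟩, fun μ' hμ' _ he ⟨C, hC, hCf⟩ =>
      h.unique μ' he hg.nonneg hC hCf⟩, h.full hf, fun hS => h.mixS hS⟩
  have := h.lower hg 0 0 I
  rwa [fmn_zero] at this
end

section
/- Let p ∈ ℕ and f ∈ Ω_w(A*, p) ∪ Ω(A*, p). Then there is a constant C > 0 (depending on f) such that: (i) f_{m′,n′}(I) ≥ C f_{m,n}(I) for all I ∈ A* and all m′ ≥ m + p, n′ ≥ n + p; (ii) for each I ∈ A* there exists an integer N = N(I) such that f_{m,n}(I) ≥ (C/2) f*(I) for all m, n ≥ N. -/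
open MeasureTheory Filter Topology
open scoped Classical ENNReal NNReal

/-- A family of words of length `n`, injective together with a marker `≤ p`. -/
lemma sum_words_le {A : Type} [Fintype A] {α : Type} [Fintype α] (n p : ℕ) (l : α → ℕ)
    (W : α → List A) (hl : ∀ a, l a ≤ p) (hW : ∀ a, (W a).length = n)
    (hinj : ∀ a b, l a = l b → W a = W b → a = b) (F : List A → ℝ) (hF : ∀ w, 0 ≤ F w) :
    ∑ a, F (W a) ≤ ((p : ℝ) + 1) * ∑ w : Fin n → A, F (List.ofFn w) := by
  have h1 : ∀ a, ∃ w : Fin n → A, List.ofFn w = W a := by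
    intro a
    obtain rfl := hW a
    exact ⟨(W a).get, List.ofFn_get _⟩
  choose w hw using h1
  let Φ : α → Fin (p + 1) × (Fin n → A) := fun a => (⟨l a, Nat.lt_succ_of_le (hl a)⟩, w a)
  have hΦ : Function.Injective Φ := by
    intro a b hab
    have h2 := Prod.ext_iff.1 hab
    refine hinj a b (by simpa [Φ] using h2.1) ?_
    rw [← hw a, ← hw b]
    exact congrArg List.ofFn h2.2
  calc ∑ a, F (W a) = ∑ a, (fun x : Fin (p + 1) × (Fin n → A) => F (List.ofFn x.2)) (Φ a) := by
        simp [Φ, hw]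
    _ = ∑ x ∈ Finset.univ.image Φ, F (List.ofFn x.2) := by
        rw [Finset.sum_image (fun a _ b _ h => hΦ h)]
    _ ≤ ∑ x : Fin (p + 1) × (Fin n → A), F (List.ofFn x.2) :=
        Finset.sum_le_sum_of_subset_of_nonneg (Finset.subset_univ _) (fun _ _ _ => hF _)
    _ = _ := by
        rw [Fintype.sum_prod_type]
        simp

lemma left_step {A : Type} [Fintype A] (p : ℕ) (f : List A → ℝ) (c : ℝ)
    (h0 : ∀ I, 0 ≤ f I) (h1 : ∀ n : ℕ, ∑ w : Fin n → A, f (List.ofFn w) = 1)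
    (hL : ∀ I J : List A, ∃ L K : List A, L.length + K.length = p ∧
      c * (f I * f J) ≤ f (L ++ I ++ K ++ J))
    (J : List A) (m m' : ℕ) (hm : m + p ≤ m') :
    c * ∑ u : Fin m → A, f (List.ofFn u ++ J) ≤
      ((p : ℝ) + 1) * ∑ u : Fin m' → A, f (List.ofFn u ++ J) := by
  obtain ⟨k, rfl⟩ := Nat.exists_eq_add_of_le hm
  choose L K hlen hle using hL
  let a1 : (Fin k → A) × (Fin m → A) → List A := fun x => List.ofFn x.1
  let a2 : (Fin k → A) × (Fin m → A) → List A := fun x => List.ofFn x.2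
  let l := fun x => (L (a1 x) (a2 x ++ J)).length
  let W := fun x => L (a1 x) (a2 x ++ J) ++ a1 x ++ K (a1 x) (a2 x ++ J) ++ a2 x
  have key := sum_words_le (m + p + k) p l W
    (fun x => by have := hlen (a1 x) (a2 x ++ J); simp only [l]; omega)
    (fun x => by
      have := hlen (a1 x) (a2 x ++ J)
      simp only [W, List.length_append, a1, a2, List.length_ofFn] at this ⊢; omega)
    (by
      intro x y hl hW
      have h3 := List.append_inj' hW (by simp [a2])
      have h4 := List.append_inj h3.1 (by
        have e1 : (a1 x).length = (a1 y).length := by simp [a1]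
        simp only [l] at hl; simp only [List.length_append]; omega)
      have h5 := List.append_inj h4.1 hl
      exact Prod.ext (List.ofFn_injective h5.2) (List.ofFn_injective h3.2))
    (fun w => f (w ++ J)) (fun _ => h0 _)
  refine le_trans ?_ key
  calc c * ∑ u : Fin m → A, f (List.ofFn u ++ J)
      = ∑ x : (Fin k → A) × (Fin m → A), c * (f (a1 x) * f (a2 x ++ J)) := by
        rw [← Finset.mul_sum, Fintype.sum_prod_type]
        simp only [a1, a2, ← Finset.mul_sum, ← Finset.sum_mul, h1, one_mul]
    _ ≤ _ := by
        refine Finset.sum_le_sum fun x _ => ?_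
        have := hle (a1 x) (a2 x ++ J)
        simpa [W] using this

lemma right_step {A : Type} [Fintype A] (p : ℕ) (f : List A → ℝ) (c : ℝ)
    (h0 : ∀ I, 0 ≤ f I) (h1 : ∀ n : ℕ, ∑ w : Fin n → A, f (List.ofFn w) = 1)
    (hR : ∀ I J : List A, ∃ K R : List A, K.length + R.length = p ∧
      c * (f I * f J) ≤ f (I ++ (K ++ (J ++ R))))
    (J : List A) (m m' : ℕ) (hm : m + p ≤ m') :
    c * ∑ u : Fin m → A, f (J ++ List.ofFn u) ≤
      ((p : ℝ) + 1) * ∑ u : Fin m' → A, f (J ++ List.ofFn u) := by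
  obtain ⟨k, rfl⟩ := Nat.exists_eq_add_of_le hm
  choose K R hlen hle using hR
  let a1 : (Fin k → A) × (Fin m → A) → List A := fun x => List.ofFn x.1
  let a2 : (Fin k → A) × (Fin m → A) → List A := fun x => List.ofFn x.2
  let l := fun x => (K (J ++ a2 x) (a1 x)).length
  let W := fun x => a2 x ++ (K (J ++ a2 x) (a1 x) ++ (a1 x ++ R (J ++ a2 x) (a1 x)))
  have key := sum_words_le (m + p + k) p l W
    (fun x => by have := hlen (J ++ a2 x) (a1 x); simp only [l]; omega)
    (fun x => by
      have := hlen (J ++ a2 x) (a1 x)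
      simp only [W, List.length_append, a1, a2, List.length_ofFn] at this ⊢; omega)
    (by
      intro x y hl hW
      have h3 := List.append_inj hW (by simp [a2])
      have h4 := List.append_inj h3.2 hl
      have h5 := List.append_inj h4.2 (by simp [a1])
      exact Prod.ext (List.ofFn_injective h5.1) (List.ofFn_injective h3.1))
    (fun w => f (J ++ w)) (fun _ => h0 _)
  refine le_trans ?_ key
  calc c * ∑ u : Fin m → A, f (J ++ List.ofFn u)
      = ∑ x : (Fin k → A) × (Fin m → A), c * (f (J ++ a2 x) * f (a1 x)) := by
        rw [← Finset.mul_sum, Fintype.sum_prod_type]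
        simp only [a1, a2, ← Finset.mul_sum, ← Finset.sum_mul, h1, mul_one]
    _ ≤ _ := by
        refine Finset.sum_le_sum fun x _ => ?_
        have := hle (J ++ a2 x) (a1 x)
        simpa [W] using this

lemma ext_left {A : Type} (f : List A → ℝ) (c : ℝ) (hc : 0 < c)
    (h : ∀ I : List A, ∃ i : A, c * f I ≤ f (i :: I)) (d : ℕ) (I : List A) :
    ∃ L : List A, L.length = d ∧ c ^ d * f I ≤ f (L ++ I) := by
  induction d with
  | zero => exact ⟨[], by simp⟩
  | succ d ih =>
    obtain ⟨L, hL, hle⟩ := ih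
    obtain ⟨i, hi⟩ := h (L ++ I)
    refine ⟨i :: L, by simp [hL], ?_⟩
    calc c ^ (d + 1) * f I = c * (c ^ d * f I) := by ring
      _ ≤ c * f (L ++ I) := by gcongr
      _ ≤ _ := by simpa using hi

lemma ext_right {A : Type} (f : List A → ℝ) (c : ℝ) (hc : 0 < c)
    (h : ∀ I : List A, ∃ i : A, c * f I ≤ f (I ++ [i])) (d : ℕ) (I : List A) :
    ∃ L : List A, L.length = d ∧ c ^ d * f I ≤ f (I ++ L) := by
  induction d with
  | zero => exact ⟨[], by simp⟩
  | succ d ih =>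
    obtain ⟨L, hL, hle⟩ := ih
    obtain ⟨i, hi⟩ := h (I ++ L)
    refine ⟨L ++ [i], by simp [hL], ?_⟩
    calc c ^ (d + 1) * f I = c * (c ^ d * f I) := by ring
      _ ≤ c * f (I ++ L) := by gcongr
      _ ≤ _ := by simpa using hi

lemma unify {A : Type} [Fintype A] (p : ℕ) (f : List A → ℝ) (hf : OmegaW p f ∨ OmegaS p f) :
    ∃ c > (0:ℝ), (∀ I, 0 ≤ f I) ∧ (∀ n : ℕ, ∑ w : Fin n → A, f (List.ofFn w) = 1) ∧
      (∀ I J : List A, ∃ L K : List A, L.length + K.length = p ∧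
        c * (f I * f J) ≤ f (L ++ I ++ K ++ J)) ∧
      (∀ I J : List A, ∃ K R : List A, K.length + R.length = p ∧
        c * (f I * f J) ≤ f (I ++ (K ++ (J ++ R)))) := by
  rcases hf with ⟨hb, c, hc, h1, h2, h3⟩ | ⟨hb, c, hc, h1, h2⟩
  · have h0 : ∀ I, 0 ≤ f I := fun I => (hb I).1
    have hd : 0 < min c 1 := lt_min hc one_pos
    have hpow : ∀ d, d ≤ p → ∀ x y z : ℝ, 0 ≤ x → c * x ≤ y → min c 1 ^ d * y ≤ z →
        min c 1 ^ p * c * x ≤ z := by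
      intro d hdp x y z hx hxy hyz
      have h4 : min c 1 ^ p ≤ min c 1 ^ d := pow_le_pow_of_le_one hd.le (min_le_right _ _) hdp
      calc min c 1 ^ p * c * x = min c 1 ^ p * (c * x) := by ring
        _ ≤ min c 1 ^ d * (c * x) := by gcongr
        _ ≤ min c 1 ^ d * y := by gcongr
        _ ≤ z := hyz
    refine ⟨min c 1 ^ p * c, by positivity, h0, h1, ?_, ?_⟩
    · intro I J
      obtain ⟨K, hK, hle⟩ := h2 I J
      obtain ⟨L, hL, hle'⟩ := ext_left f (min c 1) hd (fun I => by
        obtain ⟨i, j, hi, hj⟩ := h3 I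
        exact ⟨i, le_trans (mul_le_mul_of_nonneg_right (min_le_left _ _) (h0 I)) hi⟩)
        (p - K.length) (I ++ K ++ J)
      refine ⟨L, K, by omega, ?_⟩
      have := hpow _ (Nat.sub_le _ _) _ _ _ (mul_nonneg (h0 I) (h0 J)) hle hle'
      simpa using this
    · intro I J
      obtain ⟨K, hK, hle⟩ := h2 I J
      obtain ⟨L, hL, hle'⟩ := ext_right f (min c 1) hd (fun I => by
        obtain ⟨i, j, hi, hj⟩ := h3 I
        exact ⟨j, le_trans (mul_le_mul_of_nonneg_right (min_le_left _ _) (h0 I)) hj⟩)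
        (p - K.length) (I ++ K ++ J)
      refine ⟨K, L, by omega, ?_⟩
      have := hpow _ (Nat.sub_le _ _) _ _ _ (mul_nonneg (h0 I) (h0 J)) hle hle'
      simpa using this
  · refine ⟨c, hc, fun I => (hb I).1, h1, ?_, ?_⟩
    · intro I J
      obtain ⟨K, hK, hle⟩ := h2 I J
      exact ⟨[], K, by simpa using hK, by simpa using hle⟩
    · intro I J
      obtain ⟨K, hK, hle⟩ := h2 I J
      exact ⟨K, [], by simpa using hK, by simpa using hle⟩

/-- Lemma 4.3 / `lem-t1`: for `f ∈ Ω_w(A*,p) ∪ Ω(A*,p)` there is `C > 0` with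
(i) `f_{m',n'}(I) ≥ C f_{m,n}(I)` for `m' ≥ m+p`, `n' ≥ n+p`, and (ii) for each `I` there is
`N(I)` with `f_{m,n}(I) ≥ (C/2) f*(I)` for all `m,n ≥ N`. -/
theorem weighted_eq_states_stmt_10 {A : Type} [Fintype A]
    (p : ℕ) (f : List A → ℝ) (hf : OmegaW p f ∨ OmegaS p f) :
    ∃ C > (0:ℝ),
      (∀ I : List A, ∀ m n m' n' : ℕ, m + p ≤ m' → n + p ≤ n' →
        C * fmn f m n I ≤ fmn f m' n' I) ∧
      (∀ I : List A, ∃ N : ℕ, ∀ m n : ℕ, N ≤ m → N ≤ n →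
        C / 2 * fstar f I ≤ fmn f m n I) := by
  obtain ⟨c, hc, h0, h1, hL, hR⟩ := unify p f hf
  have hq : (0:ℝ) < (p : ℝ) + 1 := by positivity
  have hC : 0 < (c / ((p:ℝ) + 1)) * (c / ((p:ℝ) + 1)) := by positivity
  have hnn : ∀ m n I, 0 ≤ fmn f m n I := fun m n I =>
    Finset.sum_nonneg fun _ _ => Finset.sum_nonneg fun _ _ => h0 _
  have hi : ∀ I : List A, ∀ m n m' n' : ℕ, m + p ≤ m' → n + p ≤ n' →
      (c / ((p:ℝ) + 1)) * (c / ((p:ℝ) + 1)) * fmn f m n I ≤ fmn f m' n' I := by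
    intro I m n m' n' hm hn
    have e1 : (c / ((p:ℝ) + 1)) * fmn f m n I ≤ fmn f m' n I := by
      unfold fmn
      rw [Finset.sum_comm, Finset.sum_comm (γ := Fin m' → A), Finset.mul_sum]
      refine Finset.sum_le_sum fun v _ => ?_
      have := left_step p f c h0 h1 hL (I ++ List.ofFn v) m m' hm
      rw [div_mul_eq_mul_div, div_le_iff₀ hq]
      simpa [mul_comm] using this
    have e2 : (c / ((p:ℝ) + 1)) * fmn f m' n I ≤ fmn f m' n' I := by
      unfold fmn
      rw [Finset.mul_sum]
      refine Finset.sum_le_sum fun u _ => ?_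
      have := right_step p f c h0 h1 hR (List.ofFn u ++ I) n n' hn
      rw [div_mul_eq_mul_div, div_le_iff₀ hq]
      simpa [mul_comm] using this
    rw [mul_assoc]
    exact le_trans (mul_le_mul_of_nonneg_left e1 (by positivity)) e2
  refine ⟨_, hC, hi, ?_⟩
  intro I
  by_cases hs : fstar f I ≤ 0
  · exact ⟨0, fun m n _ _ => le_trans
      (mul_nonpos_of_nonneg_of_nonpos (by positivity) hs) (hnn m n I)⟩
  · push Not at hs
    have h2 : fstar f I / 2 < ⨆ m : ℕ, ⨆ n : ℕ, fmn f m n I := half_lt_self hs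
    obtain ⟨m0, hm0⟩ := exists_lt_of_lt_ciSup h2
    obtain ⟨n0, hn0⟩ := exists_lt_of_lt_ciSup hm0
    refine ⟨m0 + n0 + p, fun m n hm hn => ?_⟩
    have h3 := hi I m0 n0 m n (by omega) (by omega)
    have h4 := mul_le_mul_of_nonneg_left hn0.le hC.le
    linarith
end

section
/- Let (X, σ_X) be a one-sided subshift, p ∈ ℕ, and φ ∈ D_w(X, p). Then: (i) there exists γ > 0 such that for each I ∈ L(X) there exist symbols i, j ∈ A with iI, Ij ∈ L(X), φ(iI) ≥ γ φ(I) and φ(Ij) ≥ γ φ(I); (ii) with u_n = Σ_{J ∈ L_n(X)} φ(J), the limit u = lim_{n→∞} (1/n) log u_n exists, and there is a constant c > 0 with c^{-1} exp(nu) ≤ u_n ≤ c exp(nu) for all n. -/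
open MeasureTheory Filter Topology
open scoped Classical ENNReal NNReal

namespace WES

section
variable {A : Type}

lemma lang_of_append_right [TopologicalSpace A] {X : Set (ℕ → A)} (hX : IsSubshift X) :
    ∀ (I J : List A), Lang X (I ++ J) → Lang X J := by
  intro I
  induction I with
  | nil => intro J h; simpa using h
  | cons a I ih =>
    intro J h
    apply ih
    obtain ⟨x, hx, hxX⟩ := h
    refine ⟨shiftMap x, ?_, hX.2.2 ⟨x, hxX, rfl⟩⟩
    intro i
    have := hx ⟨i.1 + 1, by simpa using i.2⟩
    simpa [shiftMap] using this

lemma lang_of_append_left {X : Set (ℕ → A)} (I J : List A) (h : Lang X (I ++ J)) :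
    Lang X I := by
  obtain ⟨x, hx, hxX⟩ := h
  refine ⟨x, ?_, hxX⟩
  intro i
  have := hx ⟨i.1, by have := i.2; simp; omega⟩
  simpa [List.getElem_append_left i.2] using this

lemma sum_append [Fintype A] (f : List A → ℝ) (n m : ℕ) :
    ∑ w : Fin (n + m) → A, f (List.ofFn w) =
      ∑ u : Fin n → A, ∑ v : Fin m → A, f (List.ofFn u ++ List.ofFn v) := by
  rw [← Fintype.sum_prod_type', ← (Fin.appendEquiv n m).sum_comp]
  apply Finset.sum_congr rfl
  intro x _
  simp [Fin.appendEquiv, List.ofFn_fin_append]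

lemma exists_bound [Fintype A] (φ : List A → ℝ) (N : ℕ) :
    ∃ M > (0:ℝ), ∀ I : List A, I.length ≤ N → φ I ≤ M := by
  have hf : {I : List A | I.length ≤ N}.Finite := List.finite_length_le A N
  obtain ⟨M, hM⟩ := (hf.image φ).bddAbove
  refine ⟨max M 1, by positivity, fun I hI => ?_⟩
  exact (hM ⟨I, hI, rfl⟩).trans (le_max_left _ _)

end

lemma abstract_limit (u : ℕ → ℝ) (C : ℝ) (hC : 0 < C) (hpos : ∀ n, 0 < u n)
    (h1 : ∀ n m, u (n + m) ≤ C * (u n * u m)) (h2 : ∀ n m, u n * u m ≤ C * u (n + m)) :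
    ∃ l : ℝ, Tendsto (fun n : ℕ => Real.log (u n) / n) atTop (nhds l) ∧
      ∃ c > (0:ℝ), ∀ n : ℕ, 1 ≤ n →
        c⁻¹ * Real.exp (n * l) ≤ u n ∧ u n ≤ c * Real.exp (n * l) := by
  set D := Real.log C with hD
  set a := fun n => Real.log (u n) with ha
  have e1 : ∀ n m, a (n + m) ≤ D + a n + a m := by
    intro n m
    have := Real.log_le_log (hpos _) (h1 n m)
    rw [Real.log_mul hC.ne' (mul_pos (hpos _) (hpos _)).ne',
      Real.log_mul (hpos _).ne' (hpos _).ne'] at this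
    simp only [ha]; linarith
  have e2 : ∀ n m, a n + a m ≤ D + a (n + m) := by
    intro n m
    have := Real.log_le_log (mul_pos (hpos _) (hpos _)) (h2 n m)
    rw [Real.log_mul hC.ne' (hpos _).ne',
      Real.log_mul (hpos _).ne' (hpos _).ne'] at this
    simp only [ha]; linarith
  have s1 : Subadditive (fun n => a n + D) := by
    intro n m; have := e1 n m; simp only; linarith
  have s2 : Subadditive (fun n => D - a n) := by
    intro n m; have := e2 n m; simp only; linarith
  have lin1 : ∀ n : ℕ, a n + D ≤ |a 0 + D| + n * (a 1 + D) := by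
    intro n
    induction n with
    | zero => simp [le_abs_self]
    | succ n ih => have := s1 n 1; push_cast; simp only at this; linarith
  have lin2 : ∀ n : ℕ, D - a n ≤ |D - a 0| + n * (D - a 1) := by
    intro n
    induction n with
    | zero => simp [le_abs_self]
    | succ n ih => have := s2 n 1; push_cast; simp only at this; linarith
  have key : ∀ (f : ℕ → ℝ) (B E : ℝ), 0 ≤ B → (∀ n : ℕ, - B + n * E ≤ f n) →
      BddBelow (Set.range fun n : ℕ => f n / n) := by
    intro f B E hB h
    refine ⟨- B - |E|, ?_⟩
    rintro _ ⟨n, rfl⟩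
    rcases Nat.eq_zero_or_pos n with rfl | hn
    · simp; linarith [abs_nonneg E]
    · have hn' : (1:ℝ) ≤ n := by exact_mod_cast hn
      simp only
      rw [le_div_iff₀ (by linarith)]
      have := h n
      have h3 := neg_abs_le E
      nlinarith
  have b1 : BddBelow (Set.range fun n : ℕ => (a n + D) / n) :=
    key _ (|D - a 0| + |2 * D|) (-(D - a 1)) (by positivity) (by
      intro n; have := lin2 n; have := neg_abs_le (2 * D); linarith)
  have b2 : BddBelow (Set.range fun n : ℕ => (D - a n) / n) :=
    key _ (|a 0 + D| + |2 * D|) (-(a 1 + D)) (by positivity) (by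
      intro n; have := lin1 n; have := neg_abs_le (2 * D); linarith)
  have t1 := s1.tendsto_lim b1
  have t2 := s2.tendsto_lim b2
  have tD : Tendsto (fun n : ℕ => D / n) atTop (nhds 0) :=
    tendsto_const_div_atTop_nhds_zero_nat D
  have ta : Tendsto (fun n : ℕ => a n / n) atTop (nhds s1.lim) := by
    have := t1.sub tD
    simp only [sub_zero] at this
    refine this.congr fun n => ?_
    ring
  have tb : Tendsto (fun n : ℕ => a n / n) atTop (nhds (- s2.lim)) := by
    have := tD.sub t2
    simp only [zero_sub] at this
    refine this.congr fun n => ?_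
    ring
  have heq := tendsto_nhds_unique ta tb
  refine ⟨s1.lim, ta, C, hC, fun n hn => ?_⟩
  have hn' : (0:ℝ) < n := by exact_mod_cast hn
  have l1 := s1.lim_le_div b1 (n := n) (by omega)
  have l2 := s2.lim_le_div b2 (n := n) (by omega)
  rw [le_div_iff₀ hn'] at l1 l2
  have hCe : C = Real.exp D := (Real.exp_log hC).symm
  have hue : u n = Real.exp (a n) := (Real.exp_log (hpos n)).symm
  rw [hCe, hue, ← Real.exp_neg, ← Real.exp_add, ← Real.exp_add]
  constructor
  · apply Real.exp_le_exp.2; linarith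
  · apply Real.exp_le_exp.2
    have : s2.lim = - s1.lim := by linarith
    rw [this] at l2; linarith

lemma part_two {A : Type} [Fintype A] (g : List A → ℝ) (c : ℝ) (hc : 0 < c) (p : ℕ)
    (hg : ∀ I, 0 ≤ g I) (I0 : List A) (hI0 : I0 ≠ []) (hI0g : 0 < g I0)
    (h1 : ∀ I J, g (I ++ J) ≤ c⁻¹ * g I * g J)
    (h2 : ∀ I J, ∃ K : List A, K.length ≤ p ∧ c * (g I * g J) ≤ g (I ++ K ++ J)) :
    ∃ l : ℝ, Tendsto (fun n : ℕ =>
        Real.log (∑ w : Fin n → A, g (List.ofFn w)) / n) atTop (nhds l) ∧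
      ∃ c > (0:ℝ), ∀ n : ℕ, 1 ≤ n →
        c⁻¹ * Real.exp (n * l) ≤ (∑ w : Fin n → A, g (List.ofFn w)) ∧
        (∑ w : Fin n → A, g (List.ofFn w)) ≤ c * Real.exp (n * l) := by
  set S : ℕ → ℝ := fun n => ∑ w : Fin n → A, g (List.ofFn w) with hS
  have S0 : ∀ n, 0 ≤ S n := fun n => Finset.sum_nonneg fun _ _ => hg _
  have up : ∀ n m, S (n + m) ≤ c⁻¹ * (S n * S m) := by
    intro n m
    simp only [hS]
    rw [sum_append, Finset.sum_mul_sum, Finset.mul_sum]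
    refine Finset.sum_le_sum fun u _ => ?_
    rw [Finset.mul_sum]
    refine Finset.sum_le_sum fun v _ => ?_
    have := h1 (List.ofFn u) (List.ofFn v)
    linarith
  have low1 : ∀ n m, c * (S n * S m) ≤ ∑ k ∈ Finset.range (p + 1), S (n + k + m) := by
    intro n m
    have e : ∑ k ∈ Finset.range (p + 1), S (n + k + m) =
        ∑ u : Fin n → A, ∑ v : Fin m → A, ∑ k ∈ Finset.range (p + 1), ∑ w : Fin k → A,
          g (List.ofFn u ++ List.ofFn w ++ List.ofFn v) := by
      have : ∀ k, S (n + k + m) = ∑ u : Fin n → A, ∑ v : Fin m → A, ∑ w : Fin k → A,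
          g (List.ofFn u ++ List.ofFn w ++ List.ofFn v) := by
        intro k
        simp only [hS]
        rw [sum_append, sum_append (fun l => ∑ v : Fin m → A, g (l ++ List.ofFn v))]
        exact Finset.sum_congr rfl fun u _ => Finset.sum_comm
      simp only [this]
      rw [Finset.sum_comm]
      exact Finset.sum_congr rfl fun u _ => Finset.sum_comm
    rw [e]
    simp only [hS]
    rw [Finset.sum_mul_sum, Finset.mul_sum]
    refine Finset.sum_le_sum fun u _ => ?_
    rw [Finset.mul_sum]
    refine Finset.sum_le_sum fun v _ => ?_
    obtain ⟨K, hK, hle⟩ := h2 (List.ofFn u) (List.ofFn v)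
    refine hle.trans ?_
    have s1 : g (List.ofFn u ++ K ++ List.ofFn v) ≤
        ∑ w : Fin K.length → A, g (List.ofFn u ++ List.ofFn w ++ List.ofFn v) := by
      have := Finset.single_le_sum
        (f := fun w : Fin K.length → A => g (List.ofFn u ++ List.ofFn w ++ List.ofFn v))
        (fun _ _ => hg _) (Finset.mem_univ K.get)
      simpa using this
    refine s1.trans ?_
    exact Finset.single_le_sum
        (f := fun k => ∑ w : Fin k → A, g (List.ofFn u ++ List.ofFn w ++ List.ofFn v))
        (fun _ _ => Finset.sum_nonneg fun _ _ => hg _)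
        (Finset.mem_range.2 (Nat.lt_succ_of_le hK))
  set M := ∑ k ∈ Finset.range (p + 1), S k with hM
  have M0 : 0 ≤ M := Finset.sum_nonneg fun _ _ => S0 _
  have low2 : ∀ n m, c * (S n * S m) ≤ c⁻¹ * M * S (n + m) := by
    intro n m
    refine (low1 n m).trans ?_
    have e3 : c⁻¹ * M * S (n + m) = ∑ k ∈ Finset.range (p + 1), c⁻¹ * S k * S (n + m) := by
      rw [← Finset.sum_mul, ← Finset.mul_sum]
    rw [e3]
    refine Finset.sum_le_sum fun k _ => ?_
    have := up (n + m) k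
    rw [show n + k + m = n + m + k by ring]
    linarith
  have low3 : ∀ n m, S n * S m ≤ c⁻¹ * (c⁻¹ * M) * S (n + m) := by
    intro n m
    have := mul_le_mul_of_nonneg_left (low2 n m) (inv_pos.2 hc).le
    rw [inv_mul_cancel_left₀ hc.ne'] at this
    linarith
  have posI : 0 < S I0.length := by
    have := Finset.single_le_sum
        (f := fun w : Fin I0.length → A => g (List.ofFn w))
        (fun _ _ => hg _) (Finset.mem_univ I0.get)
    simp only [List.ofFn_get] at this
    exact hI0g.trans_le this
  have hl : 1 ≤ I0.length := List.length_pos_iff.2 hI0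
  have posm : ∀ k : ℕ, 0 < S ((k + 1) * I0.length) := by
    intro k
    induction k with
    | zero => simpa using posI
    | succ k ih =>
      rw [show (k + 1 + 1) * I0.length = (k + 1) * I0.length + I0.length by ring]
      refine lt_of_le_of_ne (S0 _) fun h => ?_
      have := low3 ((k + 1) * I0.length) I0.length
      rw [← h, mul_zero] at this
      exact absurd this (not_le.2 (mul_pos ih posI))
  have pos : ∀ n, 0 < S n := by
    intro n
    refine lt_of_le_of_ne (S0 _) fun h => ?_
    have h3 : n ≤ (n + 1) * I0.length := by nlinarith
    obtain ⟨m, hm⟩ := Nat.exists_eq_add_of_le h3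
    have := up n m
    rw [← h, ← hm] at this
    have := posm n
    simp at *
    linarith
  refine abstract_limit S (max c⁻¹ (c⁻¹ * (c⁻¹ * M))) (lt_max_of_lt_left (inv_pos.2 hc)) pos ?_ ?_
  · intro n m
    exact (up n m).trans (mul_le_mul_of_nonneg_right (le_max_left _ _) (mul_nonneg (S0 _) (S0 _)))
  · intro n m
    exact (low3 n m).trans (mul_le_mul_of_nonneg_right (le_max_right _ _) (S0 _))

end WES

/-- Lemma 5.1 / `lem-g1`: for `φ ∈ D_w(X,p)`, (i) there is `γ > 0` such that
each `I ∈ L(X)` extends by one symbol on either side with `φ` dropping by at most the factor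
`γ`; (ii) `u = lim (1/n) log u_n` exists with `u_n ≍ exp(nu)`, where
`u_n = Σ_{J ∈ L_n(X)} φ(J)`. -/
theorem weighted_eq_states_stmt_12 {A : Type} [Fintype A] [TopologicalSpace A]
    [DiscreteTopology A]
    (X : Set (ℕ → A)) (hX : IsSubshift X) (p : ℕ) (φ : List A → ℝ) (hφ : Dw X p φ) :
    (∃ γ > (0:ℝ), ∀ I : List A, Lang X I →
      ∃ i j : A, Lang X (i :: I) ∧ Lang X (I ++ [j]) ∧
        γ * φ I ≤ φ (i :: I) ∧ γ * φ I ≤ φ (I ++ [j])) ∧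
    ∃ u : ℝ,
      Tendsto (fun n : ℕ =>
          Real.log (∑ w : Fin n → A, if Lang X (List.ofFn w) then φ (List.ofFn w) else 0) / n)
        atTop (nhds u) ∧
      ∃ c > (0:ℝ), ∀ n : ℕ, 1 ≤ n →
        c⁻¹ * Real.exp (n * u) ≤
            (∑ w : Fin n → A, if Lang X (List.ofFn w) then φ (List.ofFn w) else 0) ∧
        (∑ w : Fin n → A, if Lang X (List.ofFn w) then φ (List.ofFn w) else 0) ≤
          c * Real.exp (n * u) := by
  obtain ⟨hnn, ⟨I0, hI0L, hI0, hI0p⟩, c, hc, hc1, hsub, hsup⟩ := hφ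
  constructor
  · obtain ⟨M, hM, hMb⟩ := WES.exists_bound φ (I0.length + p)
    have hfin : ∀ {x y z : ℝ}, 0 ≤ z → c * x ≤ c⁻¹ * y * z → y ≤ M → c * c / M * x ≤ z := by
      intro x y z hz h hy
      have h3 : c * x ≤ c⁻¹ * M * z := h.trans (by gcongr)
      have h4 := mul_le_mul_of_nonneg_left h3 (by positivity : 0 ≤ c / M)
      have e1 : c / M * (c * x) = c * c / M * x := by ring
      have e2 : c / M * (c⁻¹ * M * z) = z := by field_simp
      linarith
    refine ⟨c * c / M * φ I0, by positivity, fun I hI => ?_⟩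
    have left : ∃ i, Lang X (i :: I) ∧ c * c / M * φ I0 * φ I ≤ φ (i :: I) := by
      obtain ⟨K, hK, hL, hle⟩ := hsup I0 I hI0L hI
      obtain ⟨P, i, hP⟩ : ∃ P i, I0 ++ K = P ++ [i] := by
        rcases List.eq_nil_or_concat' (I0 ++ K) with h | h
        · simp [hI0] at h
        · obtain ⟨P, i, h⟩ := h; exact ⟨P, i, h⟩
      have hlen := congrArg List.length hP
      simp at hlen
      rw [hP, List.append_assoc, List.singleton_append] at hL hle
      have hLi := WES.lang_of_append_right hX _ _ hL
      refine ⟨i, hLi, ?_⟩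
      rw [mul_assoc]
      exact hfin (hnn _ hLi) (hle.trans (hsub _ _ hL)) (hMb P (by omega))
    have right : ∃ j, Lang X (I ++ [j]) ∧ c * c / M * φ I0 * φ I ≤ φ (I ++ [j]) := by
      obtain ⟨K, hK, hL, hle⟩ := hsup I I0 hI hI0L
      obtain ⟨j, P, hP⟩ : ∃ j P, K ++ I0 = j :: P := by
        rcases h : K ++ I0 with _ | ⟨j, P⟩
        · simp [hI0] at h
        · exact ⟨j, P, rfl⟩
      have hlen := congrArg List.length hP
      simp at hlen
      have hh : I ++ K ++ I0 = (I ++ [j]) ++ P := by simp [hP]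
      rw [hh] at hL hle
      have hLi := WES.lang_of_append_left _ _ hL
      refine ⟨j, hLi, ?_⟩
      rw [mul_assoc, mul_comm (φ I0)]
      refine hfin (y := φ P) (hnn _ hLi) (hle.trans ((hsub _ _ hL).trans (le_of_eq ?_)))
        (hMb P (by omega))
      ring
    obtain ⟨i, hi, hi'⟩ := left
    obtain ⟨j, hj, hj'⟩ := right
    exact ⟨i, j, hi, hj, hi', hj'⟩
  · have hg0 : ∀ I, 0 ≤ (if Lang X I then φ I else 0) := by
      intro I
      split_ifs with h
      · exact hnn _ h
      · exact le_rfl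
    refine WES.part_two (fun I => if Lang X I then φ I else 0) c hc p hg0
      I0 hI0 (by simpa [hI0L] using hI0p) ?_ ?_
    · intro I J
      by_cases h : Lang X (I ++ J)
      · simpa [h, WES.lang_of_append_left _ _ h, WES.lang_of_append_right hX _ _ h]
          using hsub I J h
      · have := mul_nonneg (mul_nonneg (inv_pos.2 hc).le (hg0 I)) (hg0 J)
        simpa only [h, if_false] using this
    · intro I J
      by_cases hI : Lang X I
      · by_cases hJ : Lang X J
        · obtain ⟨K, hK, hL, hle⟩ := hsup I J hI hJ
          refine ⟨K, hK, ?_⟩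
          simpa only [hI, hJ, hL, if_true] using hle
        · refine ⟨[], by simp, ?_⟩
          simpa only [hJ, if_false, mul_zero] using hg0 _
      · refine ⟨[], by simp, ?_⟩
        simpa only [hI, if_false, zero_mul, mul_zero] using hg0 _
end

section
/- Let (X, σ_X) be a one-sided subshift over a finite alphabet A, p ∈ ℕ, and φ ∈ D_w(X, p). Define f : A* → [0,1] by f(I) = φ(I) / Σ_{J ∈ L_n(X)} φ(J) for I ∈ L_n(X), n ≥ 0, and f(I) = 0 for I ∈ A* \ L(X). Then f ∈ Ω_w(A*, p), and there is a constant c > 0 with f(IJ) ≤ c f(I) f(J) for all I, J ∈ A*. Moreover, if φ ∈ D(X, p), then f ∈ Ω(A*, p). -/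
open MeasureTheory Filter Topology
open scoped Classical ENNReal NNReal

namespace WES13

/-- total weight of words of length `n` -/
noncomputable def tot {A : Type} [Fintype A] (g : List A → ℝ) (n : ℕ) : ℝ :=
  ∑ w : Fin n → A, g (List.ofFn w)

lemma tot_add {A : Type} [Fintype A] (g : List A → ℝ) (n m : ℕ) :
    tot g (n + m) = ∑ u : Fin n → A, ∑ v : Fin m → A, g (List.ofFn u ++ List.ofFn v) := by
  unfold tot
  rw [← Fintype.sum_prod_type', ← (Fin.appendEquiv n m).sum_comp]
  apply Finset.sum_congr rfl
  rintro ⟨u, v⟩ -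
  simp [Fin.appendEquiv, List.ofFn_fin_append]

lemma tot_nonneg {A : Type} [Fintype A] {g : List A → ℝ} (h0 : ∀ I, 0 ≤ g I) (n : ℕ) :
    0 ≤ tot g n := Finset.sum_nonneg fun _ _ => h0 _

lemma le_tot {A : Type} [Fintype A] {g : List A → ℝ} (h0 : ∀ I, 0 ≤ g I) (I : List A) :
    g I ≤ tot g I.length := by
  have := Finset.single_le_sum (f := fun w : Fin I.length → A => g (List.ofFn w))
    (fun _ _ => h0 _) (Finset.mem_univ I.get)
  simpa [tot, List.ofFn_get] using this

lemma tot_submul {A : Type} [Fintype A] {g : List A → ℝ} {C : ℝ}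
    (h1 : ∀ I J, g (I ++ J) ≤ C * g I * g J) (n m : ℕ) :
    tot g (n + m) ≤ C * tot g n * tot g m := by
  rw [tot_add]
  calc _ ≤ ∑ u : Fin n → A, ∑ v : Fin m → A, C * g (List.ofFn u) * g (List.ofFn v) :=
        Finset.sum_le_sum fun _ _ => Finset.sum_le_sum fun _ _ => h1 _ _
    _ = _ := by
        unfold tot
        rw [mul_assoc, Finset.sum_mul_sum]
        simp only [Finset.mul_sum, mul_assoc]

lemma le_cum {A : Type} [Fintype A] {g : List A → ℝ} (h0 : ∀ I, 0 ≤ g I) {k N : ℕ} (h : k ≤ N) :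
    tot g k ≤ ∑ k ∈ Finset.range (N + 1), tot g k :=
  Finset.single_le_sum (f := fun k => tot g k) (fun _ _ => tot_nonneg h0 _)
    (Finset.mem_range.2 (by omega))

lemma tot_supmul {A : Type} [Fintype A] {g : List A → ℝ} {C c : ℝ} {p : ℕ}
    (h0 : ∀ I, 0 ≤ g I)
    (h1 : ∀ I J, g (I ++ J) ≤ C * g I * g J)
    (h2 : ∀ I J, ∃ K : List A, K.length ≤ p ∧ c * (g I * g J) ≤ g (I ++ K ++ J)) (n m : ℕ) :
    c * (tot g n * tot g m) ≤ C * (∑ k ∈ Finset.range (p + 1), tot g k) * tot g (n + m) := by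
  have key : ∀ I J, c * (g I * g J) ≤
      ∑ k ∈ Finset.range (p + 1), ∑ v : Fin k → A, g (I ++ List.ofFn v ++ J) := by
    intro I J
    obtain ⟨K, hK, h⟩ := h2 I J
    refine h.trans ?_
    have a := Finset.single_le_sum (f := fun w : Fin K.length → A => g (I ++ List.ofFn w ++ J))
      (fun _ _ => h0 _) (Finset.mem_univ K.get)
    have b := Finset.single_le_sum
      (f := fun k => ∑ v : Fin k → A, g (I ++ List.ofFn v ++ J))
      (fun _ _ => Finset.sum_nonneg fun _ _ => h0 _)
      (Finset.mem_range.2 (show K.length < p + 1 by omega))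
    simp only [List.ofFn_get] at a
    exact a.trans b
  have e : c * (tot g n * tot g m) =
      ∑ u : Fin n → A, ∑ w : Fin m → A, c * (g (List.ofFn u) * g (List.ofFn w)) := by
    unfold tot
    rw [Finset.sum_mul_sum, Finset.mul_sum]
    simp only [Finset.mul_sum]
  rw [e]
  calc _ ≤ ∑ u : Fin n → A, ∑ w : Fin m → A, ∑ k ∈ Finset.range (p + 1),
        ∑ v : Fin k → A, g (List.ofFn u ++ List.ofFn v ++ List.ofFn w) :=
        Finset.sum_le_sum fun _ _ => Finset.sum_le_sum fun _ _ => key _ _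
    _ = ∑ k ∈ Finset.range (p + 1), tot g (n + (k + m)) := by
        have : ∀ u : Fin n → A, ∑ w : Fin m → A, ∑ k ∈ Finset.range (p + 1),
            ∑ v : Fin k → A, g (List.ofFn u ++ List.ofFn v ++ List.ofFn w) =
            ∑ k ∈ Finset.range (p + 1), tot (fun L => g (List.ofFn u ++ L)) (k + m) := by
          intro u
          rw [Finset.sum_comm]
          refine Finset.sum_congr rfl fun k _ => ?_
          rw [Finset.sum_comm, tot_add]
          simp only [List.append_assoc]
        simp only [this]
        rw [Finset.sum_comm]
        refine Finset.sum_congr rfl fun k _ => ?_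
        rw [tot_add]
        rfl
    _ ≤ ∑ k ∈ Finset.range (p + 1), C * tot g k * tot g (n + m) := by
        refine Finset.sum_le_sum fun k _ => ?_
        rw [show n + (k + m) = k + (n + m) by ring]
        exact tot_submul h1 _ _
    _ = _ := by rw [← Finset.sum_mul, Finset.mul_sum]

lemma tot_pos {A : Type} [Fintype A] {g : List A → ℝ} {C c : ℝ} {p : ℕ}
    (hC : 0 < C) (hc : 0 < c) (h0 : ∀ I, 0 ≤ g I)
    (h1 : ∀ I J, g (I ++ J) ≤ C * g I * g J)
    (h2 : ∀ I J, ∃ K : List A, K.length ≤ p ∧ c * (g I * g J) ≤ g (I ++ K ++ J))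
    {I₀ : List A} (hne : I₀ ≠ []) (hpos : 0 < g I₀) (n : ℕ) : 0 < tot g n := by
  have hl : 0 < I₀.length := List.length_pos_iff.2 hne
  have long : ∀ n : ℕ, ∃ I : List A, n ≤ I.length ∧ 0 < g I := by
    intro n
    induction n with
    | zero => exact ⟨I₀, by omega, hpos⟩
    | succ n ih =>
      obtain ⟨I, hI, hg⟩ := ih
      obtain ⟨K, -, h⟩ := h2 I I₀
      refine ⟨I ++ K ++ I₀, by simp; omega, lt_of_lt_of_le (by positivity) h⟩
  obtain ⟨I, hI, hg⟩ := long n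
  have h := h1 (I.take n) (I.drop n)
  rw [List.take_append_drop] at h
  have hp : 0 < g (I.take n) := by
    rcases (h0 (I.take n)).eq_or_lt with h' | h'
    · rw [← h'] at h; simp at h; linarith
    · exact h'
  have := le_tot h0 (I.take n)
  rw [List.length_take, min_eq_left hI] at this
  linarith

/-- supermultiplicativity passes to the normalisation -/
lemma norm_sup {A : Type} [Fintype A] {g : List A → ℝ} {C c : ℝ} {p : ℕ}
    (hC : 0 < C) (hc : 0 < c) (h0 : ∀ I, 0 ≤ g I) (ht : ∀ n, 0 < tot g n)
    (h1 : ∀ I J, g (I ++ J) ≤ C * g I * g J) (I J K : List A) (hK : K.length ≤ p)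
    (h : c * (g I * g J) ≤ g (I ++ K ++ J)) :
    c / (C * C * ∑ k ∈ Finset.range (p + 1), tot g k) *
      (g I / tot g I.length * (g J / tot g J.length)) ≤
      g (I ++ K ++ J) / tot g (I ++ K ++ J).length := by
  set U := ∑ k ∈ Finset.range (p + 1), tot g k with hU
  have hkU : tot g K.length ≤ U := le_cum h0 hK
  have tI := ht I.length
  have tJ := ht J.length
  have tK := ht K.length
  have hUp : 0 < U := lt_of_lt_of_le tK hkU
  have hlen : (I ++ K ++ J).length = K.length + (I.length + J.length) := by simp; omega
  rw [hlen]
  have b : tot g (K.length + (I.length + J.length)) ≤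
      C * C * U * (tot g I.length * tot g J.length) := by
    calc _ ≤ C * tot g K.length * tot g (I.length + J.length) := tot_submul h1 _ _
      _ ≤ C * U * (C * tot g I.length * tot g J.length) := by
        have := tot_submul h1 I.length J.length
        have := (ht (I.length + J.length)).le
        gcongr
      _ = _ := by ring
  calc _ = c * (g I * g J) / (C * C * U * (tot g I.length * tot g J.length)) := by
        field_simp
    _ ≤ g (I ++ K ++ J) / (C * C * U * (tot g I.length * tot g J.length)) := by gcongr
    _ ≤ _ := by
        have := h0 (I ++ K ++ J)
        have := ht (K.length + (I.length + J.length))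
        gcongr

lemma norm_ext {C a V t s r gI gE gR gW : ℝ} (hC : 0 < C) (hV : 0 < V)
    (ht : 0 < t) (hs : 0 < s) (hr : 0 < r) (hE : 0 ≤ gE)
    (h1 : a * gI ≤ gW) (h2 : gW ≤ C * gE * gR) (h3 : gR ≤ V) (h4 : s ≤ C * r * t) :
    a / (C * V * (C * r)) * (gI / t) ≤ gE / s := by
  have h5 : a * gI ≤ C * V * gE := by
    have : C * gE * gR ≤ C * gE * V := by gcongr
    linarith
  calc a / (C * V * (C * r)) * (gI / t) = (a * gI) / (C * V) / (C * r * t) := by field_simp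
    _ ≤ gE / (C * r * t) := by
        gcongr
        rw [div_le_iff₀ (by positivity)]
        linarith
    _ ≤ gE / s := by gcongr

lemma lang_left {A : Type} {X : Set (ℕ → A)} {I J : List A} (h : Lang X (I ++ J)) : Lang X I := by
  obtain ⟨x, hx, hX⟩ := h
  refine ⟨x, fun i => ?_, hX⟩
  have := hx ⟨i, by simp; omega⟩
  simpa [List.getElem_append_left] using this

lemma lang_right {A : Type} {X : Set (ℕ → A)} (hs : shiftMap '' X ⊆ X) {I J : List A}
    (h : Lang X (I ++ J)) : Lang X J := by
  induction I with
  | nil => simpa using h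
  | cons a I ih =>
    apply ih
    obtain ⟨x, hx, hX⟩ := h
    refine ⟨shiftMap x, fun i => ?_, hs ⟨x, hX, rfl⟩⟩
    have := hx ⟨i + 1, by have := i.2; simp at this ⊢; omega⟩
    simpa [shiftMap] using this

end WES13

open WES13

/-- Lemma 5.3 / `lem-dir`: normalizing `φ ∈ D_w(X,p)` over each length and
extending by `0` off the language yields `f ∈ Ω_w(A*,p)` with `f(IJ) ≼ f(I)f(J)`; if
`φ ∈ D(X,p)` then moreover `f ∈ Ω(A*,p)`. -/
theorem weighted_eq_states_stmt_13 {A : Type} [Fintype A] [TopologicalSpace A]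
    [DiscreteTopology A]
    (X : Set (ℕ → A)) (hX : IsSubshift X) (p : ℕ) (φ : List A → ℝ) (hφ : Dw X p φ)
    (f : List A → ℝ)
    (hfdef : ∀ I : List A, f I =
      if Lang X I then
        φ I / (∑ w : Fin I.length → A, if Lang X (List.ofFn w) then φ (List.ofFn w) else 0)
      else 0) :
    OmegaW p f ∧ (∃ c > (0:ℝ), ∀ I J : List A, f (I ++ J) ≤ c * (f I * f J)) ∧
      (Ds X p φ → OmegaS p f) := by
  obtain ⟨⟨x₀, -⟩, -, hs⟩ := hX
  set g : List A → ℝ := fun I => if Lang X I then φ I else 0 with hg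
  have hf : ∀ I, f I = g I / tot g I.length := by
    intro I
    rw [hfdef I]
    by_cases h : Lang X I
    · simp only [hg, tot, h, if_true]
    · simp [hg, h]
  obtain ⟨hn, ⟨I₀, hL0, hne, hpos⟩, c, hc, hc1, hm, hw⟩ := hφ
  have h0 : ∀ I, 0 ≤ g I := by
    intro I
    by_cases h : Lang X I
    · simpa [hg, h] using hn I h
    · simp [hg, h]
  have sub : ∀ c : ℝ, 0 < c →
      (∀ I J : List A, Lang X (I ++ J) → φ (I ++ J) ≤ c⁻¹ * φ I * φ J) →
      ∀ I J, g (I ++ J) ≤ c⁻¹ * g I * g J := by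
    intro c hc hm I J
    by_cases h : Lang X (I ++ J)
    · simpa [hg, h, lang_left h, lang_right hs h] using hm I J h
    · have e : g (I ++ J) = 0 := by simp [hg, h]
      rw [e]
      have := h0 I
      have := h0 J
      positivity
  have sup : ∀ (c : ℝ) (P : ℕ → Prop), (∃ k, P k) →
      (∀ I J : List A, Lang X I → Lang X J →
        ∃ K : List A, P K.length ∧ Lang X (I ++ K ++ J) ∧ c * (φ I * φ J) ≤ φ (I ++ K ++ J)) →
      ∀ I J, ∃ K : List A, P K.length ∧ c * (g I * g J) ≤ g (I ++ K ++ J) := by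
    rintro c P ⟨k, hk⟩ hw I J
    by_cases h : Lang X I ∧ Lang X J
    · obtain ⟨K, hK, hL, h'⟩ := hw I J h.1 h.2
      refine ⟨K, hK, ?_⟩
      simp only [hg, h.1, h.2, hL, if_true]
      exact h'
    · refine ⟨List.replicate k (x₀ 0), by simpa using hk, ?_⟩
      have e : g I * g J = 0 := by
        rw [not_and_or] at h
        rcases h with h | h <;> simp [hg, h]
      rw [e, mul_zero]
      exact h0 _
  have hpos' : 0 < g I₀ := by simpa [hg, hL0] using hpos
  have h1 := sub c hc hm
  have h2 := sup c (fun k => k ≤ p) ⟨0, Nat.zero_le _⟩ hw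
  have hC : 0 < c⁻¹ := inv_pos.2 hc
  have ht : ∀ n, 0 < tot g n := tot_pos hC hc h0 h1 h2 hne hpos'
  have h01 : ∀ I, 0 ≤ f I ∧ f I ≤ 1 := by
    intro I
    rw [hf]
    exact ⟨div_nonneg (h0 I) (ht _).le, (div_le_one (ht _)).2 (le_tot h0 I)⟩
  have hsum : ∀ n : ℕ, ∑ w : Fin n → A, f (List.ofFn w) = 1 := by
    intro n
    simp only [hf, List.length_ofFn]
    rw [← Finset.sum_div]
    exact div_self (ht n).ne'
  have hcum : ∀ N, 0 < ∑ k ∈ Finset.range (N + 1), tot g k := fun N =>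
    lt_of_lt_of_le (ht 0) (le_cum h0 (Nat.zero_le N))
  refine ⟨⟨h01, ?_⟩, ?_, ?_⟩
  · set U := ∑ k ∈ Finset.range (p + 1), tot g k with hU
    set V := ∑ k ∈ Finset.range (p + I₀.length + 1), tot g k with hV
    have hUp : 0 < U := hcum p
    have hVp : 0 < V := hcum _
    have t1 := ht 1
    set d₁ := c / (c⁻¹ * c⁻¹ * U) with hd₁
    set d₂ := (c * g I₀) / (c⁻¹ * V * (c⁻¹ * tot g 1)) with hd₂
    have hd₁p : 0 < d₁ := by positivity
    have hd₂p : 0 < d₂ := by positivity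
    refine ⟨min d₁ d₂, lt_min hd₁p hd₂p, hsum, ?_, ?_⟩
    · intro I J
      obtain ⟨K, hK, h⟩ := h2 I J
      refine ⟨K, hK, ?_⟩
      have a := norm_sup hC hc h0 ht h1 I J K hK h
      rw [← hf, ← hf, ← hf] at a
      exact (mul_le_mul_of_nonneg_right (min_le_left _ _)
        (mul_nonneg (h01 I).1 (h01 J).1)).trans a
    · intro I
      have hi : ∃ i : A, d₂ * f I ≤ f (i :: I) := by
        obtain ⟨K, hK, h⟩ := h2 I₀ I
        have hne' : I₀ ++ K ≠ [] := by simp [hne]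
        obtain ⟨L, i, hLi⟩ := List.eq_nil_or_concat (I₀ ++ K) |>.resolve_left hne'
        have hlen : (I₀ ++ K).length = L.length + 1 := by rw [hLi]; simp
        refine ⟨i, ?_⟩
        rw [hf, hf]
        refine norm_ext (gR := g L) (gW := g (I₀ ++ K ++ I)) hC hVp (ht _) (ht _) t1 (h0 _)
          (by linarith) ?_ ?_ ?_
        · rw [hLi]
          have := h1 L (i :: I)
          simp only [List.concat_eq_append, List.append_assoc, List.singleton_append] at this ⊢
          linarith
        · refine (le_tot h0 L).trans (le_cum h0 ?_)
          simp at hlen; omega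
        · have := tot_submul h1 1 I.length
          rw [add_comm] at this
          simpa using this
      have hj : ∃ j : A, d₂ * f I ≤ f (I ++ [j]) := by
        obtain ⟨K, hK, h⟩ := h2 I I₀
        have hne' : K ++ I₀ ≠ [] := by simp [hne]
        obtain ⟨j, L, hLi⟩ := List.exists_cons_of_ne_nil hne'
        have hlen : (K ++ I₀).length = L.length + 1 := by rw [hLi]; simp
        refine ⟨j, ?_⟩
        rw [hf, hf]
        refine norm_ext (gR := g L) (gW := g (I ++ K ++ I₀)) hC hVp (ht _) (ht _) t1 (h0 _)
          (by linarith) ?_ ?_ ?_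
        · rw [List.append_assoc, hLi]
          have := h1 (I ++ [j]) L
          simpa using this
        · refine (le_tot h0 L).trans (le_cum h0 ?_)
          simp at hlen; omega
        · have := tot_submul h1 1 I.length
          rw [add_comm] at this
          simpa using this
      obtain ⟨i, hi⟩ := hi
      obtain ⟨j, hj⟩ := hj
      have := mul_le_mul_of_nonneg_right (min_le_right d₁ d₂) (h01 I).1
      exact ⟨i, j, this.trans hi, this.trans hj⟩
  · set U := ∑ k ∈ Finset.range (p + 1), tot g k with hU
    have hUp : 0 < U := hcum p
    refine ⟨c⁻¹ * (c⁻¹ * U / c), by positivity, ?_⟩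
    intro I J
    rw [hf, hf, hf, List.length_append]
    have s := tot_supmul h0 h1 h2 I.length J.length
    rw [← hU] at s
    have tI := ht I.length
    have tJ := ht J.length
    have tIJ := ht (I.length + J.length)
    have gI := h0 I
    have gJ := h0 J
    rw [div_le_iff₀ tIJ]
    refine (h1 I J).trans ?_
    have e : c⁻¹ * (c⁻¹ * U / c) * (g I / tot g I.length * (g J / tot g J.length)) *
        tot g (I.length + J.length) = c⁻¹ * g I * g J *
        ((c⁻¹ * U * tot g (I.length + J.length)) /
          (c * (tot g I.length * tot g J.length))) := by
      field_simp
    rw [e]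
    refine le_mul_of_one_le_right (by positivity) ?_
    rw [one_le_div (by positivity)]
    exact s
  · rintro ⟨-, -, c', hc', -, hm', hw'⟩
    have h1' := sub c' hc' hm'
    have h2' := sup c' (fun k => k = p) ⟨p, rfl⟩ hw'
    have hUp := hcum p
    refine ⟨h01, c' / (c'⁻¹ * c'⁻¹ * ∑ k ∈ Finset.range (p + 1), tot g k), by positivity,
      hsum, ?_⟩
    intro I J
    obtain ⟨K, hK, h⟩ := h2' I J
    refine ⟨K, hK, ?_⟩
    have a := norm_sup (inv_pos.2 hc') hc' h0 ht h1' I J K hK.le h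
    rw [← hf, ← hf, ← hf] at a
    exact a
end

section
/- Let (X, σ_X) be a one-sided subshift over a finite alphabet and let η, μ ∈ M(X, σ_X). If η is not absolutely continuous with respect to μ, then lim_{n→∞} Σ_{I ∈ L_n(X)} ( η(I) log μ(I) − η(I) log η(I) ) = −∞ (with the conventions 0 log 0 = 0 and η(I) log 0 = −∞ when η(I) > 0). -/
open MeasureTheory Filter Topology
open scoped Classical ENNReal NNReal

/-- restriction of a sequence to its first `n` coordinates -/
def rst {A : Type} (n : ℕ) (x : ℕ → A) : Fin n → A := fun i => x i

lemma cyl_ofFn_eq {A : Type} {n : ℕ} (w : Fin n → A) :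
    cyl (List.ofFn w) = rst n ⁻¹' {w} := by
  ext x
  simp only [cyl, Set.mem_ofPred_eq, Set.mem_preimage, Set.mem_singleton_iff, funext_iff, rst]
  constructor
  · intro h i
    have := h ⟨i, by simp⟩
    simpa using this
  · intro h i
    have := h ⟨i, by simpa using i.2⟩
    simpa using this

lemma term_le (p q t : ℝ) (hp : 0 ≤ p) (hq : 0 ≤ q) (ht : 0 < t) :
    ((p : ℝ) : EReal) * elog q - ((p * Real.log p : ℝ) : EReal)
      ≤ ((q / t + p * Real.log t : ℝ) : EReal) := by
  rcases hp.eq_or_lt with rfl | hp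
  · have : 0 ≤ q / t := by positivity
    simp
    exact_mod_cast this
  rcases hq.eq_or_lt with rfl | hq
  · simp [elog, EReal.coe_mul_bot_of_pos hp]
  rw [elog, if_neg (not_le.2 hq)]
  norm_cast
  have h := Real.log_le_sub_one_of_pos (show 0 < q / (p * t) by positivity)
  rw [Real.log_div hq.ne' (by positivity), Real.log_mul hp.ne' ht.ne'] at h
  have h2 := mul_le_mul_of_nonneg_left h hp.le
  have h3 : p * (q / (p * t) - 1) = q / t - p := by field_simp
  rw [h3] at h2
  nlinarith

lemma ereal_coe_sum {ι : Type*} (s : Finset ι) (f : ι → ℝ) :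
    ((∑ i ∈ s, f i : ℝ) : EReal) = ∑ i ∈ s, ((f i : ℝ) : EReal) := by
  induction s using Finset.induction_on with
  | empty => simp
  | insert a s ha ih => rw [Finset.sum_insert ha, Finset.sum_insert ha, EReal.coe_add, ih]

lemma sum_mw {A : Type} [Fintype A] [TopologicalSpace A]
    [DiscreteTopology A] [MeasurableSpace A] [BorelSpace A]
    (X : Set (ℕ → A)) (μ : Measure (ℕ → A)) [IsProbabilityMeasure μ]
    (n : ℕ) (W : Finset (Fin n → A)) :
    ∑ w ∈ W, mw X μ (List.ofFn w) = (μ.restrict X).real (rst n ⁻¹' (W : Set (Fin n → A))) := by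
  have hm : Measurable (rst n : (ℕ → A) → (Fin n → A)) := by
    unfold rst; fun_prop
  rw [← sum_measureReal_preimage_singleton W (fun w _ => hm (measurableSet_singleton w))]
  refine Finset.sum_congr rfl fun w _ => ?_
  rw [mw, cyl_ofFn_eq, measureReal_def, Measure.restrict_apply (hm (measurableSet_singleton w))]

lemma exists_closed {A : Type} [Fintype A] [TopologicalSpace A]
    [DiscreteTopology A] [MeasurableSpace A] [BorelSpace A]
    (X : Set (ℕ → A)) (hX : IsSubshift X)
    (η μ : Measure (ℕ → A)) (hη : InvOn X η) (hac : ¬ η ≪ μ) :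
    ∃ K, IsClosed K ∧ K ⊆ X ∧ μ K = 0 ∧ 0 < η K := by
  obtain ⟨h1, -, h2⟩ := hη
  have hXm : MeasurableSet X := hX.2.1.isClosed.measurableSet
  have : ∃ E, MeasurableSet E ∧ μ E = 0 ∧ η E ≠ 0 := by
    by_contra! h
    exact hac (Measure.AbsolutelyContinuous.mk fun s hs h0 => h s hs h0)
  obtain ⟨E, hE, h0, hne⟩ := this
  have hc : η Xᶜ = 0 := by rw [prob_compl_eq_zero_iff hXm]; exact h2
  have hEX : η (E ∩ X) = η E := measure_inter_conull hc
  obtain ⟨K, hK, hKc, hlt⟩ := (hE.inter hXm).exists_lt_isClosed_of_ne_top (μ := η)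
    (measure_ne_top _ _) (show 0 < η (E ∩ X) by rw [hEX]; exact pos_iff_ne_zero.2 hne)
  exact ⟨K, hKc, fun x hx => (hK hx).2,
    measure_mono_null (fun x hx => (hK hx).1) h0, hlt⟩

lemma tendsto_nbhd {A : Type} [Fintype A] [TopologicalSpace A]
    [DiscreteTopology A] [MeasurableSpace A] [BorelSpace A]
    (μ : Measure (ℕ → A)) [IsFiniteMeasure μ] (K : Set (ℕ → A)) (hK : IsClosed K)
    (h0 : μ K = 0) :
    Tendsto (fun n => μ (rst n ⁻¹' (rst n '' K))) atTop (𝓝 0) := by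
  have hI : ⋂ n, (rst n ⁻¹' (rst n '' K)) = K := by
    apply Set.Subset.antisymm
    · intro x hx
      simp only [Set.mem_iInter, Set.mem_preimage, Set.mem_image] at hx
      choose y hy hxy using hx
      refine hK.mem_of_tendsto (f := y) (b := atTop) ?_ (Eventually.of_forall hy)
      rw [tendsto_pi_nhds]
      intro i
      apply tendsto_const_nhds.congr'
      filter_upwards [eventually_gt_atTop i] with n hn
      exact (congrFun (hxy n) ⟨i, hn⟩).symm
    · exact Set.subset_iInter fun n => Set.subset_preimage_image _ _
  rw [← h0]
  nth_rewrite 2 [← hI]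
  apply tendsto_measure_iInter_atTop
  · intro n
    have hm : Measurable (rst n : (ℕ → A) → (Fin n → A)) := by
      unfold rst; fun_prop
    exact (hm (Set.toFinite _).measurableSet).nullMeasurableSet
  · intro m n hmn x hx
    obtain ⟨y, hy, hxy⟩ := hx
    exact ⟨y, hy, funext fun i => congrFun hxy ⟨i, i.2.trans_le hmn⟩⟩
  · exact ⟨0, measure_ne_top _ _⟩

/-- Lemma 5.4 / `lem-4.1`: if `η` is not absolutely continuous with respect to
`μ` (both shift-invariant probability measures on `X`), then
`Σ_{I ∈ L_n(X)} (η(I) log μ(I) − η(I) log η(I)) → −∞`. -/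
theorem weighted_eq_states_stmt_14 {A : Type} [Fintype A] [TopologicalSpace A]
    [DiscreteTopology A] [MeasurableSpace A] [BorelSpace A]
    (X : Set (ℕ → A)) (hX : IsSubshift X)
    (η μ : Measure (ℕ → A)) (hη : InvOn X η) (hμ : InvOn X μ)
    (hac : ¬ η ≪ μ) :
    Tendsto (fun n : ℕ => ∑ w : Fin n → A,
        (((mw X η (List.ofFn w) : ℝ) : EReal) * elog (mw X μ (List.ofFn w)) -
          ((mw X η (List.ofFn w) * Real.log (mw X η (List.ofFn w)) : ℝ) : EReal)))
      atTop (nhds (⊥ : EReal)) := by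
  obtain ⟨K, hKc, hKX, hK0, hKη⟩ := exists_closed X hX η μ hη hac
  have := hη.1
  have := hμ.1
  have hc : 0 < η.real K := ENNReal.toReal_pos hKη.ne' (measure_ne_top _ _)
  set c := η.real K with hcdef
  rw [EReal.tendsto_nhds_bot_iff_real]
  intro M
  -- choose the small parameter
  obtain ⟨ε, hε0, hε1, hεM⟩ : ∃ ε : ℝ, 0 < ε ∧ ε < 1 ∧ 2 + c * Real.log ε < M := by
    refine ⟨Real.exp (-((|M| + 3) / c)), Real.exp_pos _, ?_, ?_⟩
    · rw [Real.exp_lt_one_iff]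
      have : 0 < (|M| + 3) / c := by positivity
      linarith
    · rw [Real.log_exp]
      have : c * -((|M| + 3) / c) = -(|M| + 3) := by field_simp
      rw [this]
      linarith [neg_abs_le M]
  have hlog : Real.log ε < 0 := Real.log_neg hε0 hε1
  have hT := tendsto_nbhd μ K hKc hK0
  filter_upwards [hT.eventually (gt_mem_nhds (show (0 : ℝ≥0∞) < ENNReal.ofReal ε by simpa using hε0))]
    with n hn
  set W : Finset (Fin n → A) := (Set.toFinite (rst n '' K)).toFinset with hW
  have hWc : (W : Set (Fin n → A)) = rst n '' K := by simp [hW]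
  have hq : ∑ w ∈ W, mw X μ (List.ofFn w) ≤ ε := by
    rw [sum_mw, hWc]
    refine ENNReal.toReal_le_of_le_ofReal hε0.le ?_
    exact (Measure.restrict_apply_le _ _).trans hn.le
  have hq1 : ∑ w ∈ Wᶜ, mw X μ (List.ofFn w) ≤ 1 := by
    rw [sum_mw]
    refine ENNReal.toReal_le_of_le_ofReal zero_le_one ?_
    rw [ENNReal.ofReal_one]
    exact (Measure.restrict_apply_le _ _).trans prob_le_one
  have hp : c ≤ ∑ w ∈ W, mw X η (List.ofFn w) := by
    rw [sum_mw, hWc, hcdef]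
    have h1 : η.real K = (η.restrict X).real K := by
      rw [measureReal_def, measureReal_def, Measure.restrict_eq_self _ hKX]
    rw [h1]
    exact measureReal_mono (Set.subset_preimage_image _ _)
  have hnn : ∀ (ν : Measure (ℕ → A)) (w : Fin n → A), 0 ≤ mw X ν (List.ofFn w) :=
    fun ν w => ENNReal.toReal_nonneg
  have hbound : ∑ w : Fin n → A,
      (((mw X η (List.ofFn w) : ℝ) : EReal) * elog (mw X μ (List.ofFn w)) -
        ((mw X η (List.ofFn w) * Real.log (mw X η (List.ofFn w)) : ℝ) : EReal))
      ≤ ((∑ w : Fin n → A, (mw X μ (List.ofFn w) / (if w ∈ W then ε else 1)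
          + mw X η (List.ofFn w) * Real.log (if w ∈ W then ε else 1)) : ℝ) : EReal) := by
    rw [ereal_coe_sum]
    refine Finset.sum_le_sum fun w _ => term_le _ _ _ (hnn _ _) (hnn _ _) ?_
    split_ifs <;> simp [hε0]
  refine hbound.trans_lt ?_
  rw [EReal.coe_lt_coe_iff]
  refine lt_of_le_of_lt ?_ hεM
  rw [← Finset.sum_add_sum_compl W]
  have hA : ∑ w ∈ W, (mw X μ (List.ofFn w) / (if w ∈ W then ε else 1)
          + mw X η (List.ofFn w) * Real.log (if w ∈ W then ε else 1)) =
      (∑ w ∈ W, mw X μ (List.ofFn w)) / ε + (∑ w ∈ W, mw X η (List.ofFn w)) * Real.log ε := by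
    rw [Finset.sum_div, Finset.sum_mul, ← Finset.sum_add_distrib]
    exact Finset.sum_congr rfl fun w hw => by simp [hw]
  have hB : ∑ w ∈ Wᶜ, (mw X μ (List.ofFn w) / (if w ∈ W then ε else 1)
          + mw X η (List.ofFn w) * Real.log (if w ∈ W then ε else 1)) =
      ∑ w ∈ Wᶜ, mw X μ (List.ofFn w) :=
    Finset.sum_congr rfl fun w hw => by simp [Finset.mem_compl.1 hw]
  rw [hA, hB]
  have h1 : (∑ w ∈ W, mw X μ (List.ofFn w)) / ε ≤ 1 := (div_le_one hε0).2 hq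
  have h2 := mul_le_mul_of_nonpos_right hp hlog.le
  linarith
end
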